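/- Let 0<p≤1 and let Y be a complex Banach space isomorphic to the complexification of a real Banach space. Then the quasi-Banach spaces H_p(𝔻,Y) and H_p(𝕋,Y) are isomorphic. -/

import Mathlib

/-!
Statement 12: Let `0 < p ≤ 1` and let `Y` be a complex Banach space isomorphic to the
complexification of a real Banach space. Then the quasi-Banach spaces `H_p(𝔻,Y)` and
`H_p(𝕋,Y)` are isomorphic.

`H_p(𝔻,Y)` consists of the analytic `F : 𝔻 → Y` with uniformly bounded `p`-means on circles;
`H_p(𝕋,Y)` consists of the `Y`-valued distributions `u` on the circle with
`sup_{0≤r<1}(∫_I (‖P_r*u‖^p + ‖Q_r*u‖^p))^{1/p} < ∞`. The regularity of `Y` is axiomatized by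
a bounded real-linear embedding `ι : X → Y` of a real Banach space `X` with bounded
real-linear projections `ReY, ImY` satisfying `y = ι(ReY y) + i·ι(ImY y)`.
-/

noncomputable section
open Filter Topology MeasureTheory ENNReal

def I₀ : Set ℝ := Set.Ico (-(1 : ℝ)/2) (1/2)

def circlePt (r t : ℝ) : ℂ := (r : ℂ) * Complex.exp (2 * Real.pi * t * Complex.I)

def poissonP (r t : ℝ) : ℝ :=
  (((1 : ℂ) + circlePt r t) / ((1 : ℂ) - circlePt r t)).re

def poissonQ (r t : ℝ) : ℝ :=
  (((1 : ℂ) + circlePt r t) / ((1 : ℂ) - circlePt r t)).im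

def Smooth1PeriodicC (g : ℝ → ℂ) : Prop := ContDiff ℝ (⊤ : ℕ∞) g ∧ ∀ t, g (t + 1) = g t

def testSeminormC (i : ℕ) (g : ℝ → ℂ) : ℝ :=
  ⨆ t : Set.Icc (0 : ℝ) 1, ‖iteratedDeriv i g t‖

def IsPeriodicDistributionC {Y : Type*} [NormedAddCommGroup Y] [NormedSpace ℂ Y]
    (u : (ℝ → ℂ) → Y) : Prop :=
  (∀ g h, Smooth1PeriodicC g → Smooth1PeriodicC h → u (g + h) = u g + u h) ∧
  (∀ (c : ℂ) (g), Smooth1PeriodicC g → u (c • g) = c • u g) ∧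
  ∃ (k : ℕ) (C : ℝ), ∀ g, Smooth1PeriodicC g →
    ‖u g‖ ≤ C * ∑ i ∈ Finset.range (k + 1), testSeminormC i g

def pConvC {Y : Type*} (u : (ℝ → ℂ) → Y) (r t : ℝ) : Y :=
  u (fun s => (poissonP r (t - s) : ℂ))

def qConvC {Y : Type*} (u : (ℝ → ℂ) → Y) (r t : ℝ) : Y :=
  u (fun s => (poissonQ r (t - s) : ℂ))

/-- The quasi-norm of `H_p(𝕋,Y)`. -/
def qHpT {Y : Type*} [NormedAddCommGroup Y] (p : ℝ) (u : (ℝ → ℂ) → Y) : ℝ≥0∞ :=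
  ⨆ r : Set.Ico (0 : ℝ) 1,
    (∫⁻ t in I₀, ((‖pConvC u r.1 t‖₊ : ℝ≥0∞) ^ p + (‖qConvC u r.1 t‖₊ : ℝ≥0∞) ^ p)) ^ (1/p)

def memHpT {Y : Type*} [NormedAddCommGroup Y] [NormedSpace ℂ Y] (p : ℝ)
    (u : (ℝ → ℂ) → Y) : Prop :=
  IsPeriodicDistributionC u ∧ qHpT p u < ⊤

def hpIntegral {Y : Type*} [NormedAddCommGroup Y] (p : ℝ) (F : ℂ → Y) (r : ℝ) : ℝ≥0∞ :=
  ∫⁻ t in I₀, (‖F (circlePt r t)‖₊ : ℝ≥0∞) ^ p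

def memHpD {Y : Type*} [NormedAddCommGroup Y] [NormedSpace ℂ Y] (p : ℝ) (F : ℂ → Y) : Prop :=
  DifferentiableOn ℂ F (Metric.ball 0 1) ∧
  ∃ B : ℝ≥0∞, B < ⊤ ∧ ∀ r : ℝ, 0 ≤ r → r < 1 → hpIntegral p F r ≤ B

def qHpD {Y : Type*} [NormedAddCommGroup Y] (p : ℝ) (F : ℂ → Y) : ℝ≥0∞ :=
  ⨆ r : Set.Ico (0 : ℝ) 1, (hpIntegral p F r.1) ^ (1/p)

lemma aux_circlePt_norm (r t : ℝ) (hr : 0 ≤ r) : ‖circlePt r t‖ = r := by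
  unfold circlePt
  rw [norm_mul]
  have : (2 * Real.pi * t * Complex.I : ℂ) = ((2 * Real.pi * t : ℝ) : ℂ) * Complex.I := by
    push_cast; ring
  rw [this, Complex.norm_exp_ofReal_mul_I]
  simp [abs_of_nonneg hr]

lemma aux_circlePt_cont (r : ℝ) : Continuous (fun t => circlePt r t) := by
  unfold circlePt
  fun_prop

lemma aux_circlePt_periodic (r t : ℝ) : circlePt r (t + 1) = circlePt r t := by
  unfold circlePt
  have : (2 * Real.pi * ((t + 1 : ℝ) : ℂ) * Complex.I : ℂ)
      = 2 * Real.pi * t * Complex.I + 2 * Real.pi * Complex.I := by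
    push_cast; ring
  rw [this, Complex.exp_periodic]

lemma aux_circleMap (r t : ℝ) : circleMap 0 r (2 * Real.pi * t) = circlePt r t := by
  unfold circlePt circleMap
  push_cast
  simp

lemma aux_cauchy_bound {Y : Type*} [NormedAddCommGroup Y] [NormedSpace ℂ Y] [CompleteSpace Y]
    (F : ℂ → Y) (hF : DifferentiableOn ℂ F (Metric.ball 0 1)) (ρ : ℝ) (hρ1 : ρ < 1)
    (z : ℂ) (hz : ‖z‖ < ρ) :
    ‖F z‖ ≤ 1 / (ρ - ‖z‖) * ∫ t in (-(1 : ℝ)/2)..(1/2), ‖F (circlePt ρ t)‖ := by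
  have hρ0 : 0 < ρ := lt_of_le_of_lt (norm_nonneg z) hz
  have hsub : Metric.closedBall (0 : ℂ) ρ ⊆ Metric.ball 0 1 := Metric.closedBall_subset_ball hρ1
  have h1 := (hF.mono hsub).circleIntegral_sub_inv_smul (w := z) (by simpa using hz)
  have hc : Continuous (fun t => ‖F (circlePt ρ t)‖) := by
    refine (hF.continuousOn.comp_continuous (aux_circlePt_cont ρ) ?_).norm
    intro t
    simp [aux_circlePt_norm ρ t hρ0.le, hρ1]
  have hc2 : Continuous (fun t => ‖F (circleMap 0 ρ t)‖) := by
    refine (hF.continuousOn.comp_continuous (continuous_circleMap 0 ρ) ?_).norm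
    intro t
    simp [abs_of_pos hρ0, hρ1]
  have h2 : ‖∮ w in C(0, ρ), (w - z)⁻¹ • F w‖ ≤
      ∫ θ in (0 : ℝ)..(2 * Real.pi), 1 / (ρ - ‖z‖) * ‖F (circleMap 0 ρ θ)‖ := by
    unfold circleIntegral
    refine intervalIntegral.norm_integral_le_of_norm_le Real.two_pi_pos.le ?_ ?_
    · refine Eventually.of_forall fun θ _ => ?_
      rw [norm_smul, norm_smul, ← mul_assoc]
      refine mul_le_mul_of_nonneg_right ?_ (norm_nonneg _)
      rw [deriv_circleMap, norm_mul, norm_inv]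
      simp only [Complex.norm_I, mul_one, norm_circleMap_zero, abs_of_pos hρ0]
      have h3 : ρ - ‖z‖ ≤ ‖circleMap 0 ρ θ - z‖ := by
        have := norm_sub_norm_le (circleMap 0 ρ θ) z
        simpa [abs_of_pos hρ0] using this
      have h4 : 0 < ρ - ‖z‖ := by linarith
      rw [one_div]
      calc ρ * ‖circleMap 0 ρ θ - z‖⁻¹ ≤ 1 * ‖circleMap 0 ρ θ - z‖⁻¹ := by
            gcongr
        _ ≤ (ρ - ‖z‖)⁻¹ := by
            rw [one_mul]; gcongr
    · exact (continuous_const.mul hc2).intervalIntegrable _ _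
  rw [h1, norm_smul, intervalIntegral.integral_const_mul] at h2
  have h5 : ∫ θ in (0 : ℝ)..(2 * Real.pi), ‖F (circleMap 0 ρ θ)‖
      = 2 * Real.pi * ∫ t in (-(1 : ℝ)/2)..(1/2), ‖F (circlePt ρ t)‖ := by
    have h6 : ∫ t in (-(1 : ℝ)/2)..(1/2), ‖F (circlePt ρ t)‖
        = ∫ t in (0 : ℝ)..1, ‖F (circlePt ρ t)‖ := by
      have hper : Function.Periodic (fun t => ‖F (circlePt ρ t)‖) 1 := by
        intro t; simp only [aux_circlePt_periodic]
      have := hper.intervalIntegral_add_eq (-(1 : ℝ)/2) 0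
      rw [show (-(1 : ℝ)/2 + 1) = 1/2 by norm_num, zero_add] at this
      exact this
    rw [h6]
    have h7 := intervalIntegral.smul_integral_comp_mul_left
      (f := fun θ => ‖F (circleMap 0 ρ θ)‖) (a := 0) (b := 1) (2 * Real.pi)
    simp only [aux_circleMap, mul_zero, mul_one, smul_eq_mul] at h7
    exact h7.symm
  rw [h5] at h2
  have h8 : ‖(2 * Real.pi * Complex.I : ℂ)‖ = 2 * Real.pi := by
    simp [abs_of_pos Real.pi_pos]
  rw [h8] at h2
  have h9 : 0 < 2 * Real.pi := Real.two_pi_pos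
  have h10 : 2 * Real.pi * ‖F z‖ ≤
    2 * Real.pi * (1 / (ρ - ‖z‖) * ∫ t in (-(1 : ℝ)/2)..(1/2), ‖F (circlePt ρ t)‖) := by
    linarith
  exact le_of_mul_le_mul_left h10 h9

lemma aux_hpIntegral_real {Y : Type*} [NormedAddCommGroup Y] [NormedSpace ℂ Y]
    (F : ℂ → Y) (hF : DifferentiableOn ℂ F (Metric.ball 0 1)) (p : ℝ) (hp : 0 < p)
    (ρ : ℝ) (hρ0 : 0 ≤ ρ) (hρ1 : ρ < 1) :
    hpIntegral p F ρ = ENNReal.ofReal (∫ t in (-(1 : ℝ)/2)..(1/2), ‖F (circlePt ρ t)‖ ^ p) := by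
  have hc : Continuous (fun t => ‖F (circlePt ρ t)‖ ^ p) := by
    refine ((hF.continuousOn.comp_continuous (aux_circlePt_cont ρ) ?_).norm).rpow_const ?_
    · intro t
      simp [aux_circlePt_norm ρ t hρ0, hρ1]
    · intro t; right; exact hp.le
  rw [intervalIntegral.integral_of_le (by norm_num), ofReal_integral_eq_lintegral_ofReal]
  · unfold hpIntegral I₀
    rw [← restrict_Ico_eq_restrict_Ioc]
    refine lintegral_congr fun t => ?_
    rw [← ENNReal.ofReal_rpow_of_nonneg (norm_nonneg _) hp.le, ofReal_norm]
    rfl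
  · have := hc.intervalIntegrable (μ := volume) (-(1 : ℝ)/2) (1/2)
    rwa [intervalIntegrable_iff_integrableOn_Ioc_of_le (by norm_num)] at this
  · exact Eventually.of_forall fun t => by positivity

lemma aux_HL_R {Y : Type*} [NormedAddCommGroup Y] [NormedSpace ℂ Y] [CompleteSpace Y]
    (F : ℂ → Y) (hF : DifferentiableOn ℂ F (Metric.ball 0 1)) (p : ℝ) (hp : 0 < p) (hp1 : p ≤ 1)
    (K : ℝ) (hK0 : 0 ≤ K)
    (hK : ∀ ρ : ℝ, 1/4 ≤ ρ → ρ < 1 → hpIntegral p F ρ ≤ ENNReal.ofReal K)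
    (R : ℝ) (hR : 1/2 ≤ R) (hR1 : R < 1) (z : ℂ) (hz : ‖z‖ ≤ R) :
    (R - ‖z‖) * ‖F z‖ ^ p ≤ 2 ^ (1/p) * K := by
  have hsub : Metric.closedBall (0 : ℂ) R ⊆ Metric.ball 0 1 := Metric.closedBall_subset_ball hR1
  have hcont : ContinuousOn (fun z : ℂ => (R - ‖z‖) * ‖F z‖ ^ p) (Metric.closedBall 0 R) := by
    refine ContinuousOn.mul (by fun_prop) ?_
    exact ((hF.continuousOn.mono hsub).norm).rpow_const (fun x _ => Or.inr hp.le)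
  obtain ⟨z₀, hz₀, hmax⟩ := (isCompact_closedBall (0 : ℂ) R).exists_isMaxOn
    ⟨0, by simp; linarith⟩ hcont
  have hmax' : ∀ w : ℂ, ‖w‖ ≤ R → (R - ‖w‖) * ‖F w‖ ^ p ≤ (R - ‖z₀‖) * ‖F z₀‖ ^ p := by
    intro w hw
    exact hmax (by simpa using hw)
  refine (hmax' z hz).trans ?_
  have hz₀R : ‖z₀‖ ≤ R := by simpa using hz₀
  have hC0 : 0 ≤ (2 : ℝ) ^ (1/p) * K := by positivity
  rcases hz₀R.eq_or_lt with h | hlt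
  · rw [h]; simpa using hC0
  set x := ‖F z₀‖ with hx
  have hx0 : 0 ≤ x := norm_nonneg _
  rcases hx0.eq_or_lt with h | hxpos
  · rw [← h, Real.zero_rpow hp.ne']; simpa using hC0
  set d := R - ‖z₀‖ with hd
  have hdpos : 0 < d := by linarith
  set ρ := ‖z₀‖ + d / 2 with hρ
  have hρR : ρ < R := by linarith
  have hρ4 : 1/4 ≤ ρ := by have := norm_nonneg z₀; linarith
  have hρ1 : ρ < 1 := by linarith
  have hρ0 : 0 ≤ ρ := by linarith
  have hcau := aux_cauchy_bound F hF ρ hρ1 z₀ (by linarith)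
  have hKρ := hK ρ hρ4 hρ1
  rw [aux_hpIntegral_real F hF p hp ρ hρ0 hρ1, ENNReal.ofReal_le_ofReal_iff hK0] at hKρ
  -- pointwise bound on circle
  have hpt : ∀ t, ‖F (circlePt ρ t)‖ ≤ (2 ^ (1/p) * x) ^ (1 - p) * ‖F (circlePt ρ t)‖ ^ p := by
    intro t
    set y := ‖F (circlePt ρ t)‖ with hy
    have hy0 : 0 ≤ y := norm_nonneg _
    have h1 := hmax' (circlePt ρ t) (by rw [aux_circlePt_norm ρ t hρ0]; linarith)
    rw [aux_circlePt_norm ρ t hρ0] at h1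
    have h2 : R - ρ = d / 2 := by rw [hρ, hd]; ring
    rw [h2] at h1
    have h3 : y ^ p ≤ 2 * x ^ p := by
      have : d / 2 * y ^ p ≤ d / 2 * (2 * x ^ p) := by
        calc d / 2 * y ^ p ≤ d * x ^ p := h1
          _ = _ := by ring
      exact le_of_mul_le_mul_left this (by linarith)
    have h4 : y ≤ 2 ^ (1/p) * x := by
      have h5 : y ^ p ≤ (2 ^ (1/p) * x) ^ p := by
        rw [Real.mul_rpow (by positivity) hx0, ← Real.rpow_mul (by norm_num), one_div,
          inv_mul_cancel₀ hp.ne', Real.rpow_one]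
        exact h3
      exact (Real.rpow_le_rpow_iff hy0 (by positivity) hp).1 h5
    rcases hy0.eq_or_lt with h | hypos
    · rw [← h, Real.zero_rpow hp.ne']; simp
    calc y = y ^ (1 - p) * y ^ p := by rw [← Real.rpow_add hypos]; simp
      _ ≤ _ := by
        gcongr
  have hcont1 : Continuous (fun t => F (circlePt ρ t)) := by
    refine (hF.continuousOn.comp_continuous (aux_circlePt_cont ρ) ?_)
    intro t
    simp [aux_circlePt_norm ρ t hρ0, hρ1]
  have h_integ : ∫ t in (-(1 : ℝ)/2)..(1/2), ‖F (circlePt ρ t)‖ ≤ (2 ^ (1/p) * x) ^ (1 - p) * K := by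
    calc ∫ t in (-(1 : ℝ)/2)..(1/2), ‖F (circlePt ρ t)‖
        ≤ ∫ t in (-(1 : ℝ)/2)..(1/2), (2 ^ (1/p) * x) ^ (1 - p) * ‖F (circlePt ρ t)‖ ^ p := by
          refine intervalIntegral.integral_mono (by norm_num)
            (hcont1.norm.intervalIntegrable _ _) ?_ hpt
          exact (continuous_const.mul
            (hcont1.norm.rpow_const fun t => Or.inr hp.le)).intervalIntegrable _ _
      _ = (2 ^ (1/p) * x) ^ (1 - p) * ∫ t in (-(1 : ℝ)/2)..(1/2), ‖F (circlePt ρ t)‖ ^ p :=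
          intervalIntegral.integral_const_mul _ _
      _ ≤ _ := by gcongr
  have h6 : ρ - ‖z₀‖ = d / 2 := by rw [hρ]; ring
  rw [h6] at hcau
  have h7 : x ≤ 1 / (d/2) * ((2 ^ (1/p) * x) ^ (1 - p) * K) :=
    hcau.trans (by gcongr)
  have h8 : (2 ^ (1/p) * x) ^ (1 - p) = 2 ^ (1/p) / 2 * x ^ (1 - p) := by
    rw [Real.mul_rpow (by positivity) hx0, ← Real.rpow_mul (by norm_num)]
    congr 1
    rw [show 1 / p * (1 - p) = 1/p - 1 by field_simp, Real.rpow_sub (by norm_num), Real.rpow_one]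
  rw [h8] at h7
  have h9 : x = x ^ (1 - p) * x ^ p := by rw [← Real.rpow_add hxpos]; simp
  have h10 : 0 < x ^ (1 - p) := by positivity
  have h11 : x ^ (1 - p) * (d * x ^ p) ≤ x ^ (1 - p) * (2 ^ (1/p) * K) := by
    calc x ^ (1 - p) * (d * x ^ p) = d * x := by rw [mul_left_comm, ← h9]
      _ ≤ d * (1 / (d/2) * (2 ^ (1/p) / 2 * x ^ (1 - p) * K)) := by gcongr
      _ = _ := by field_simp
  exact le_of_mul_le_mul_left h11 h10

lemma aux_HL {Y : Type*} [NormedAddCommGroup Y] [NormedSpace ℂ Y] [CompleteSpace Y]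
    (F : ℂ → Y) (hF : DifferentiableOn ℂ F (Metric.ball 0 1)) (p : ℝ) (hp : 0 < p) (hp1 : p ≤ 1)
    (K : ℝ) (hK0 : 0 ≤ K)
    (hK : ∀ ρ : ℝ, 1/4 ≤ ρ → ρ < 1 → hpIntegral p F ρ ≤ ENNReal.ofReal K)
    (z : ℂ) (hz : ‖z‖ < 1) :
    (1 - ‖z‖) * ‖F z‖ ^ p ≤ 2 ^ (1/p) * K := by
  have h1 : Tendsto (fun R : ℝ => (R - ‖z‖) * ‖F z‖ ^ p) (𝓝[<] 1)
      (𝓝 ((1 - ‖z‖) * ‖F z‖ ^ p)) := by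
    apply tendsto_nhdsWithin_of_tendsto_nhds
    exact (Continuous.tendsto (by fun_prop) _)
  refine le_of_tendsto h1 ?_
  have h2 : ∀ᶠ R : ℝ in 𝓝[<] 1, R ∈ Set.Ioo (max (1/2) ‖z‖) 1 :=
    Ioo_mem_nhdsLT (max_lt (by norm_num) hz)
  filter_upwards [h2] with R hR
  have := hR.1
  rw [max_lt_iff] at this
  exact aux_HL_R F hF p hp hp1 K hK0 hK R this.1.le hR.2 z this.2.le

def fe (n : ℤ) (s : ℝ) : ℂ := Complex.exp (2 * Real.pi * Complex.I * n * s)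

def fc (n : ℤ) (g : ℝ → ℂ) : ℂ := ∫ s in (0 : ℝ)..1, g s * fe n s

lemma aux_fe_norm (n : ℤ) (s : ℝ) : ‖fe n s‖ = 1 := by
  unfold fe
  rw [show (2 * Real.pi * Complex.I * n * s : ℂ) = ((2 * Real.pi * n * s : ℝ) : ℂ) * Complex.I by
    push_cast; ring, Complex.norm_exp_ofReal_mul_I]

lemma aux_fe_add (n m : ℤ) (s : ℝ) : fe (n + m) s = fe n s * fe m s := by
  unfold fe
  rw [← Complex.exp_add]
  congr 1
  push_cast; ring

lemma aux_fe_zero (s : ℝ) : fe 0 s = 1 := by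
  unfold fe; simp

lemma aux_fe_int (n : ℤ) : fe n 1 = 1 := by
  unfold fe
  rw [Complex.exp_eq_one_iff]
  exact ⟨n, by push_cast; ring⟩

lemma aux_fe_contDiff (n : ℤ) : ContDiff ℝ (⊤ : ℕ∞) (fe n) := by
  unfold fe
  have : ContDiff ℝ (⊤ : ℕ∞) (fun s : ℝ => (s : ℂ)) := Complex.ofRealCLM.contDiff
  exact (contDiff_const.mul this).cexp

lemma aux_fe_cont (n : ℤ) : Continuous (fe n) := (aux_fe_contDiff n).continuous

lemma aux_fe_addarg (n : ℤ) (s t : ℝ) : fe n (s + t) = fe n s * fe n t := by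
  unfold fe
  rw [← Complex.exp_add]
  congr 1
  push_cast; ring

lemma aux_fe_smooth (n : ℤ) : Smooth1PeriodicC (fe n) :=
  ⟨aux_fe_contDiff n, fun t => by rw [aux_fe_addarg, aux_fe_int, mul_one]⟩

lemma aux_fe_hasDeriv (n : ℤ) (s : ℝ) :
    HasDerivAt (fe n) ((2 * Real.pi * Complex.I * n) * fe n s) s := by
  have h1 : HasDerivAt (fun z : ℂ => Complex.exp (2 * Real.pi * Complex.I * n * z))
      (Complex.exp (2 * Real.pi * Complex.I * n * s) * (2 * Real.pi * Complex.I * n * 1)) (s : ℂ) :=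
    ((hasDerivAt_id (s : ℂ)).const_mul _).cexp
  have h2 := h1.comp_ofReal
  refine HasDerivAt.congr_deriv (f := fe n) h2 ?_
  unfold fe; ring

lemma aux_fe_iter (n : ℤ) (i : ℕ) :
    iteratedDeriv i (fe n) = fun s => (2 * Real.pi * Complex.I * n) ^ i * fe n s := by
  induction i with
  | zero => simp
  | succ i ih =>
    rw [iteratedDeriv_succ, ih]
    funext s
    rw [((aux_fe_hasDeriv n s).const_mul _).deriv]
    ring

lemma aux_sm_add {g h : ℝ → ℂ} (hg : Smooth1PeriodicC g) (hh : Smooth1PeriodicC h) :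
    Smooth1PeriodicC (g + h) :=
  ⟨hg.1.add hh.1, fun t => by simp [hg.2 t, hh.2 t]⟩

lemma aux_sm_smul {g : ℝ → ℂ} (c : ℂ) (hg : Smooth1PeriodicC g) :
    Smooth1PeriodicC (c • g) :=
  ⟨hg.1.const_smul c, fun t => by simp [hg.2 t]⟩

lemma aux_sm_zero : Smooth1PeriodicC 0 := ⟨contDiff_const, fun _ => rfl⟩

lemma aux_sm_deriv {g : ℝ → ℂ} (hg : Smooth1PeriodicC g) : Smooth1PeriodicC (deriv g) := by
  refine ⟨?_, fun t => ?_⟩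
  · exact ((contDiff_infty_iff_deriv (𝕜 := ℝ)).1 hg.1).2
  · have h : (fun s => g (s + 1)) = g := funext hg.2
    have := deriv_comp_add_const (f := g) 1 t
    rw [h] at this
    exact this.symm

lemma aux_sm_iter {g : ℝ → ℂ} (hg : Smooth1PeriodicC g) (i : ℕ) :
    Smooth1PeriodicC (iteratedDeriv i g) := by
  induction i with
  | zero => simpa using hg
  | succ i ih => rw [iteratedDeriv_succ]; exact aux_sm_deriv ih

lemma aux_fc_deriv {g : ℝ → ℂ} (hg : Smooth1PeriodicC g) (n : ℤ) :
    fc n (deriv g) = -(2 * Real.pi * Complex.I * n) * fc n g := by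
  unfold fc
  have hd : ∀ x, HasDerivAt g (deriv g x) x := fun x =>
    (hg.1.differentiable (by simp) x).hasDerivAt
  have h := intervalIntegral.integral_mul_deriv_eq_deriv_mul (a := 0) (b := 1)
    (fun x _ => hd x) (fun x _ => aux_fe_hasDeriv n x)
    ((aux_sm_deriv hg).1.continuous.intervalIntegrable _ _)
    ((continuous_const.mul (aux_fe_cont n)).intervalIntegrable _ _)
  have h0 : g 1 = g 0 := by simpa using hg.2 0
  have h00 : fe n 0 = 1 := by unfold fe; simp
  rw [aux_fe_int, h00, h0, sub_self, zero_sub] at h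
  have h2 : ∫ x in (0 : ℝ)..1, g x * (2 * Real.pi * Complex.I * n * fe n x)
     = (2 * Real.pi * Complex.I * n) * ∫ x in (0 : ℝ)..1, g x * fe n x := by
    rw [← intervalIntegral.integral_const_mul]
    congr 1; funext x; ring
  rw [h2] at h
  rw [neg_mul, h, neg_neg]

lemma aux_fc_iter {g : ℝ → ℂ} (hg : Smooth1PeriodicC g) (n : ℤ) (k : ℕ) :
    fc n (iteratedDeriv k g) = (-(2 * Real.pi * Complex.I * n)) ^ k * fc n g := by
  induction k with
  | zero => simp
  | succ k ih =>
    rw [iteratedDeriv_succ, aux_fc_deriv (aux_sm_iter hg k), ih]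
    ring

lemma aux_semi_bdd {g : ℝ → ℂ} (hg : Smooth1PeriodicC g) (i : ℕ) :
    BddAbove (Set.range fun t : Set.Icc (0 : ℝ) 1 => ‖iteratedDeriv i g t‖) := by
  have h := (isCompact_Icc (a := (0 : ℝ)) (b := 1)).bddAbove_image
    (f := fun t => ‖iteratedDeriv i g t‖) (aux_sm_iter hg i).1.continuous.norm.continuousOn
  rw [Set.image_eq_range] at h
  exact h

lemma aux_semi_nonneg (i : ℕ) (g : ℝ → ℂ) : 0 ≤ testSeminormC i g :=
  Real.iSup_nonneg fun _ => norm_nonneg _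

lemma aux_le_semi {g : ℝ → ℂ} (hg : Smooth1PeriodicC g) (i : ℕ) (t : ℝ) (ht : t ∈ Set.Icc (0 : ℝ) 1) :
    ‖iteratedDeriv i g t‖ ≤ testSeminormC i g :=
  le_ciSup (aux_semi_bdd hg i) ⟨t, ht⟩

lemma aux_fc_le {g : ℝ → ℂ} (hg : Smooth1PeriodicC g) (n : ℤ) (i : ℕ) :
    ‖fc n (iteratedDeriv i g)‖ ≤ testSeminormC i g := by
  unfold fc
  have := intervalIntegral.norm_integral_le_of_norm_le_const (a := (0 : ℝ)) (b := 1)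
    (f := fun s => iteratedDeriv i g s * fe n s) (C := testSeminormC i g) (by
      intro x hx
      rw [norm_mul, aux_fe_norm, mul_one]
      rw [Set.uIoc_of_le zero_le_one] at hx
      exact aux_le_semi hg i x ⟨hx.1.le, hx.2⟩)
  simpa using this

lemma aux_fc_bound {g : ℝ → ℂ} (hg : Smooth1PeriodicC g) (n : ℤ) (k : ℕ) :
    (|(n : ℝ)| + 1) ^ k * ‖fc n g‖ ≤ 2 ^ (k + 1) * ∑ i ∈ Finset.range (k + 1), testSeminormC i g := by
  set S := ∑ i ∈ Finset.range (k + 1), testSeminormC i g with hS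
  have hle : ∀ i ∈ Finset.range (k + 1), testSeminormC i g ≤ S := fun i hi =>
    Finset.single_le_sum (f := fun i => testSeminormC i g) (fun j _ => aux_semi_nonneg j g) hi
  have h0 : ‖fc n g‖ ≤ S := by
    have := aux_fc_le hg n 0
    rw [iteratedDeriv_zero] at this
    exact this.trans (hle 0 (by simp))
  have hk : |(n : ℝ)| ^ k * ‖fc n g‖ ≤ S := by
    have h1 := (aux_fc_le hg n k).trans (hle k (by simp))
    rw [aux_fc_iter hg, norm_mul, norm_pow] at h1
    refine le_trans ?_ h1
    gcongr
    simp only [norm_neg, norm_mul, Complex.norm_I, Complex.norm_intCast, Complex.norm_real,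
      Complex.norm_ofNat, mul_one, Real.norm_eq_abs, abs_of_pos Real.pi_pos]
    have := Real.pi_gt_three
    nlinarith [abs_nonneg (n : ℝ)]
  have h2 : (|(n : ℝ)| + 1) ^ k ≤ 2 ^ k * (|(n : ℝ)| ^ k + 1) := by
    have h3 : (|(n : ℝ)| + 1) ≤ 2 * max |(n : ℝ)| 1 := by
      have := le_max_left |(n : ℝ)| 1
      have := le_max_right |(n : ℝ)| 1
      linarith
    calc (|(n : ℝ)| + 1) ^ k ≤ (2 * max |(n : ℝ)| 1) ^ k := by gcongr
      _ = 2 ^ k * (max |(n : ℝ)| 1) ^ k := mul_pow _ _ _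
      _ ≤ _ := by
        gcongr
        rcases max_choice |(n : ℝ)| 1 with h | h <;> rw [h]
        · linarith
        · have : 0 ≤ |(n : ℝ)| ^ k := by positivity
          simp [this]
  calc (|(n : ℝ)| + 1) ^ k * ‖fc n g‖ ≤ 2 ^ k * (|(n : ℝ)| ^ k + 1) * ‖fc n g‖ := by gcongr
    _ = 2 ^ k * (|(n : ℝ)| ^ k * ‖fc n g‖ + ‖fc n g‖) := by ring
    _ ≤ 2 ^ k * (S + S) := by gcongr
    _ = _ := by ring

lemma aux_summable_int : Summable (fun n : ℤ => ((|(n : ℝ)| + 1) ^ 2)⁻¹) := by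
  have h : Summable (fun n : ℕ => (((n : ℝ) + 1) ^ 2)⁻¹) := by
    have := (summable_nat_add_iff 1).2 (Real.summable_nat_pow_inv.2 (by norm_num : 1 < 2))
    simpa using this
  refine Summable.of_nat_of_neg ?_ ?_
  · simpa using h
  · simpa using h

lemma aux_fc_mul_bound {g : ℝ → ℂ} (hg : Smooth1PeriodicC g) (n : ℤ) (k : ℕ) :
    ‖fc n g‖ * (|(n : ℝ)| + 1) ^ k ≤
      (2 ^ (k + 3) * ∑ i ∈ Finset.range (k + 2 + 1), testSeminormC i g)
        * ((|(n : ℝ)| + 1) ^ 2)⁻¹ := by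
  have h := aux_fc_bound hg n (k + 2)
  rw [← div_eq_mul_inv, le_div_iff₀ (by positivity)]
  calc _ = (|(n : ℝ)| + 1) ^ (k + 2) * ‖fc n g‖ := by ring
    _ ≤ _ := h

lemma aux_fc_summable {g : ℝ → ℂ} (hg : Smooth1PeriodicC g) :
    Summable (fun n : ℤ => ‖fc n g‖) := by
  refine Summable.of_nonneg_of_le (fun n => norm_nonneg _) (fun n => ?_)
    (aux_summable_int.mul_left (2 ^ (0 + 3) * ∑ i ∈ Finset.range (0 + 2 + 1), testSeminormC i g))
  have := aux_fc_mul_bound hg n 0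
  simpa using this

lemma aux_fourier_hasSum {g : ℝ → ℂ} (hg : Smooth1PeriodicC g) (t : ℝ) :
    HasSum (fun n : ℤ => fc n g * fe (-n) t) (g t) := by
  have hper : Function.Periodic g 1 := hg.2
  let G : C(AddCircle (1 : ℝ), ℂ) :=
    ⟨hper.lift, by
      refine continuous_coinduced_dom.2 ?_
      exact hg.1.continuous⟩
  have hG : ∀ s : ℝ, G (s : AddCircle (1 : ℝ)) = g s := fun s => hper.lift_coe s
  have hfou : ∀ (n : ℤ) (s : ℝ), fourier n (s : AddCircle (1 : ℝ)) = fe n s := by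
    intro n s
    rw [fourier_coe_apply]
    unfold fe
    simp
  have hco : ∀ n : ℤ, fourierCoeff G n = fc (-n) g := by
    intro n
    rw [fourierCoeff_eq_intervalIntegral _ _ 0]
    unfold fc
    simp only [hG, hfou, smul_eq_mul, zero_add, div_one, one_smul, mul_comm]
  have hs : Summable (fourierCoeff G) := by
    have h1 : Summable (fun n : ℤ => fc n g) := (aux_fc_summable hg).of_norm
    have h2 := (Equiv.neg ℤ).summable_iff.2 h1
    refine h2.congr fun n => ?_
    simp [hco]
  have h := has_pointwise_sum_fourier_series_of_summable hs (t : AddCircle (1 : ℝ))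
  rw [hG] at h
  rw [← (Equiv.neg ℤ).hasSum_iff]
  refine h.congr_fun ?_
  intro n
  simp [hco, hfou]

lemma aux_tail {α E : Type*} [NormedAddCommGroup E] [CompleteSpace E] {f : α → E} {a : E} (hf : HasSum f a)
    (hn : Summable fun n => ‖f n‖) (s : Finset α) :
    ‖a - ∑ n ∈ s, f n‖ ≤ ∑' n, ‖f n‖ - ∑ n ∈ s, ‖f n‖ := by
  have h1 := hf.summable.sum_add_tsum_compl (s := s)
  have h2 := hn.sum_add_tsum_compl (s := s)
  rw [hf.tsum_eq] at h1
  rw [← h1, ← h2, add_sub_cancel_left, add_sub_cancel_left]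
  exact norm_tsum_le_tsum_norm (hn.subtype _)

section dist
variable {Y : Type*} [NormedAddCommGroup Y] [NormedSpace ℂ Y]

lemma aux_u_sum {u : (ℝ → ℂ) → Y} (hu : IsPeriodicDistributionC u) {α : Type*} (s : Finset α)
    (c : α → ℂ) (n : α → ℤ) :
    Smooth1PeriodicC (∑ i ∈ s, c i • fe (n i)) ∧
    u (∑ i ∈ s, c i • fe (n i)) = ∑ i ∈ s, c i • u (fe (n i)) := by
  classical
  induction s using Finset.induction_on with
  | empty =>
    refine ⟨by simpa using aux_sm_zero, ?_⟩
    have := hu.2.1 0 0 aux_sm_zero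
    simpa using this
  | insert a s ha ih =>
    rw [Finset.sum_insert ha, Finset.sum_insert ha]
    have h1 := aux_sm_smul (c a) (aux_fe_smooth (n a))
    refine ⟨aux_sm_add h1 ih.1, ?_⟩
    rw [hu.1 _ _ h1 ih.1, ih.2, hu.2.1 _ _ (aux_fe_smooth _)]

lemma aux_iter_sum {α : Type*} (s : Finset α) (c : α → ℂ) (n : α → ℤ) (i : ℕ) (t : ℝ) :
    iteratedDeriv i (∑ j ∈ s, c j • fe (n j)) t =
      ∑ j ∈ s, c j * ((2 * Real.pi * Complex.I * n j) ^ i * fe (n j) t) := by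
  rw [iteratedDeriv_sum]
  · refine Finset.sum_congr rfl fun j _ => ?_
    rw [iteratedDeriv_const_smul]
    · rw [aux_fe_iter]; rfl
    · exact ((aux_fe_contDiff (n j)).of_le (by exact_mod_cast le_top)).contDiffAt
  · intro j _
    exact (((aux_fe_contDiff (n j)).const_smul (c j)).of_le (by exact_mod_cast le_top)).contDiffAt

lemma aux_repr {u : (ℝ → ℂ) → Y} (hu : IsPeriodicDistributionC u) {g : ℝ → ℂ}
    (hg : Smooth1PeriodicC g) :
    HasSum (fun n : ℤ => fc n g • u (fe (-n))) (u g) := by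
  obtain ⟨k, C, hC⟩ := hu.2.2
  have key : ∀ s : Finset ℤ, ‖(∑ n ∈ s, fc n g • u (fe (-n))) - u g‖ ≤
      |C| * ∑ i ∈ Finset.range (k + 1),
        (∑' n, ‖fc n (iteratedDeriv i g)‖ - ∑ n ∈ s, ‖fc n (iteratedDeriv i g)‖) := by
    intro s
    set S : ℝ → ℂ := ∑ n ∈ s, fc n g • fe (-n) with hS
    have h1 := aux_u_sum hu s (fun n => fc n g) (fun n => -n)
    have hSs : Smooth1PeriodicC S := h1.1
    have hD : Smooth1PeriodicC (g + (-1 : ℂ) • S) := aux_sm_add hg (aux_sm_smul _ hSs)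
    have h2 : u (g + (-1 : ℂ) • S) = u g - ∑ n ∈ s, fc n g • u (fe (-n)) := by
      rw [hu.1 _ _ hg (aux_sm_smul _ hSs), hu.2.1 _ _ hSs, hS, h1.2]
      simp [sub_eq_add_neg]
    rw [← norm_neg, neg_sub, ← h2]
    refine (hC _ hD).trans ?_
    have h3 : ∀ i ∈ Finset.range (k + 1), testSeminormC i (g + (-1 : ℂ) • S) ≤
        ∑' n, ‖fc n (iteratedDeriv i g)‖ - ∑ n ∈ s, ‖fc n (iteratedDeriv i g)‖ := by
      intro i _
      have : Nonempty (Set.Icc (0 : ℝ) 1) := ⟨⟨0, by simp⟩⟩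
      refine ciSup_le fun t => ?_
      have hcg : ContDiffAt ℝ i g t := (hg.1.of_le (by exact_mod_cast le_top)).contDiffAt
      have hcS : ContDiffAt ℝ i S t := (hSs.1.of_le (by exact_mod_cast le_top)).contDiffAt
      have h4 : iteratedDeriv i (g + (-1 : ℂ) • S) t = iteratedDeriv i g t -
          ∑ n ∈ s, fc n (iteratedDeriv i g) * fe (-n) t := by
        have hcS2 : ContDiffAt ℝ i ((-1 : ℂ) • S) t := hcS.const_smul (-1 : ℂ)
        rw [iteratedDeriv_add hcg hcS2, iteratedDeriv_const_smul hcS, hS,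
          aux_iter_sum, sub_eq_add_neg, neg_one_smul]
        congr 2
        refine Finset.sum_congr rfl fun n _ => ?_
        rw [aux_fc_iter hg]
        push_cast
        ring
      rw [h4]
      have h5 := aux_tail (aux_fourier_hasSum (aux_sm_iter hg i) t)
        (by simpa [aux_fe_norm] using aux_fc_summable (aux_sm_iter hg i)) s
      simpa [aux_fe_norm] using h5
    calc C * ∑ i ∈ Finset.range (k + 1), testSeminormC i (g + (-1 : ℂ) • S)
        ≤ |C| * ∑ i ∈ Finset.range (k + 1), testSeminormC i (g + (-1 : ℂ) • S) := by
          gcongr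
          · exact Finset.sum_nonneg fun i _ => aux_semi_nonneg _ _
          · exact le_abs_self C
      _ ≤ _ := by
          gcongr with i hi
          exact h3 i hi
  have hlim : Tendsto (fun s : Finset ℤ => |C| * ∑ i ∈ Finset.range (k + 1),
        (∑' n, ‖fc n (iteratedDeriv i g)‖ - ∑ n ∈ s, ‖fc n (iteratedDeriv i g)‖)) atTop (𝓝 0) := by
    have : Tendsto (fun s : Finset ℤ => |C| * ∑ i ∈ Finset.range (k + 1),
        (∑' n, ‖fc n (iteratedDeriv i g)‖ - ∑ n ∈ s, ‖fc n (iteratedDeriv i g)‖)) atTop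
        (𝓝 (|C| * ∑ i ∈ Finset.range (k + 1), (∑' n, ‖fc n (iteratedDeriv i g)‖
          - ∑' n, ‖fc n (iteratedDeriv i g)‖))) := by
      refine Tendsto.const_mul _ (tendsto_finsetSum _ fun i _ => ?_)
      exact tendsto_const_nhds.sub (aux_fc_summable (aux_sm_iter hg i)).hasSum
    simpa using this
  exact tendsto_iff_norm_sub_tendsto_zero.2 (squeeze_zero (fun _ => norm_nonneg _) key hlim)

/-- polynomially bounded coefficients -/
def PBZ (b : ℤ → Y) : Prop := ∃ (N : ℕ) (C : ℝ), 0 ≤ C ∧ ∀ n : ℤ, ‖b n‖ ≤ C * (|(n : ℝ)| + 1) ^ N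

open Classical in
def UU (b : ℤ → Y) (g : ℝ → ℂ) : Y :=
  if Smooth1PeriodicC g then ∑' n : ℤ, fc n g • b n else 0

lemma aux_fc_add {g h : ℝ → ℂ} (hg : Smooth1PeriodicC g) (hh : Smooth1PeriodicC h) (n : ℤ) :
    fc n (g + h) = fc n g + fc n h := by
  unfold fc
  rw [← intervalIntegral.integral_add]
  · congr 1; funext s; simp [add_mul]
  · exact (hg.1.continuous.mul (aux_fe_cont n)).intervalIntegrable _ _
  · exact (hh.1.continuous.mul (aux_fe_cont n)).intervalIntegrable _ _

lemma aux_fc_smul {g : ℝ → ℂ} (c : ℂ) (n : ℤ) : fc n (c • g) = c * fc n g := by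
  unfold fc
  rw [← intervalIntegral.integral_const_mul]
  congr 1; funext s; simp [mul_assoc]

lemma aux_fc_fe (n m : ℤ) : fc n (fe m) = if n = -m then 1 else 0 := by
  unfold fc
  simp_rw [← aux_fe_add]
  split_ifs with h
  · subst h
    simp [aux_fe_zero]
  · have hne : (2 * Real.pi * Complex.I * ((m + n : ℤ) : ℂ)) ≠ 0 := by
      have : ((m + n : ℤ) : ℂ) ≠ 0 := by
        rw [Int.cast_ne_zero]; omega
      simp [Real.pi_ne_zero] at this ⊢
      exact this
    have h1 : ∫ s in (0 : ℝ)..1, (2 * Real.pi * Complex.I * ((m + n : ℤ) : ℂ)) * fe (m + n) s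
        = fe (m + n) 1 - fe (m + n) 0 :=
      intervalIntegral.integral_eq_sub_of_hasDerivAt (fun s _ => aux_fe_hasDeriv (m + n) s)
        ((continuous_const.mul (aux_fe_cont _)).intervalIntegrable _ _)
    rw [intervalIntegral.integral_const_mul, aux_fe_int,
      show fe (m + n) 0 = 1 by unfold fe; simp, sub_self] at h1
    exact (mul_eq_zero.1 h1).resolve_left hne

variable [CompleteSpace Y]

lemma aux_U_summable_norm {b : ℤ → Y} {N : ℕ} {C : ℝ} (hC : 0 ≤ C)
    (hb : ∀ n : ℤ, ‖b n‖ ≤ C * (|(n : ℝ)| + 1) ^ N)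
    {g : ℝ → ℂ} (hg : Smooth1PeriodicC g) (n : ℤ) :
    ‖fc n g • b n‖ ≤ C * ((2 ^ (N + 3) * ∑ i ∈ Finset.range (N + 2 + 1), testSeminormC i g)
        * ((|(n : ℝ)| + 1) ^ 2)⁻¹) := by
  rw [norm_smul]
  calc ‖fc n g‖ * ‖b n‖ ≤ ‖fc n g‖ * (C * (|(n : ℝ)| + 1) ^ N) := by gcongr; exact hb n
    _ = C * (‖fc n g‖ * (|(n : ℝ)| + 1) ^ N) := by ring
    _ ≤ _ := mul_le_mul_of_nonneg_left (aux_fc_mul_bound hg n N) hC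

lemma aux_U_summable {b : ℤ → Y} (hb : PBZ b) {g : ℝ → ℂ} (hg : Smooth1PeriodicC g) :
    Summable (fun n : ℤ => fc n g • b n) := by
  obtain ⟨N, C, hC, hb⟩ := hb
  exact Summable.of_norm_bounded ((aux_summable_int.mul_left _).mul_left _)
    (aux_U_summable_norm hC hb hg)

lemma aux_U_dist {b : ℤ → Y} (hb : PBZ b) : IsPeriodicDistributionC (UU b) := by
  refine ⟨fun g h hg hh => ?_, fun c g hg => ?_, ?_⟩
  · unfold UU
    rw [if_pos hg, if_pos hh, if_pos (aux_sm_add hg hh),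
      ← (aux_U_summable hb hg).tsum_add (aux_U_summable hb hh)]
    congr 1; funext n
    rw [aux_fc_add hg hh, add_smul]
  · unfold UU
    rw [if_pos hg, if_pos (aux_sm_smul c hg), ← (aux_U_summable hb hg).tsum_const_smul]
    congr 1; funext n
    rw [aux_fc_smul, mul_smul]
  · obtain ⟨N, C, hC, hb⟩ := hb
    refine ⟨N + 2, C * 2 ^ (N + 3) * ∑' n : ℤ, ((|(n : ℝ)| + 1) ^ 2)⁻¹, fun g hg => ?_⟩
    unfold UU
    rw [if_pos hg]
    refine (tsum_of_norm_bounded (((aux_summable_int.mul_left _).mul_left _).hasSum)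
      (aux_U_summable_norm hC hb hg)).trans (le_of_eq ?_)
    rw [tsum_mul_left, tsum_mul_left]
    ring

lemma aux_U_fe (b : ℤ → Y) (n : ℤ) : UU b (fe (-n)) = b n := by
  unfold UU
  rw [if_pos (aux_fe_smooth _), tsum_eq_single n]
  · simp [aux_fc_fe]
  · intro m hm
    simp [aux_fc_fe, hm]

end dist

/-- Szegő type kernel -/
def HH (σ : ℤ) (r t s : ℝ) : ℂ := (1 - (r : ℂ) * fe σ (t - s))⁻¹

lemma aux_HH_ne (σ : ℤ) (r t s : ℝ) (hr : 0 ≤ r) (hr1 : r < 1) : 1 - (r : ℂ) * fe σ (t - s) ≠ 0 := by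
  intro h
  have h1 : ‖(r : ℂ) * fe σ (t - s)‖ = 1 := by
    rw [← sub_eq_zero.1 h]; simp
  rw [norm_mul, aux_fe_norm] at h1
  simp [abs_of_nonneg hr] at h1
  linarith

lemma aux_HH_smooth (σ : ℤ) (r t : ℝ) (hr : 0 ≤ r) (hr1 : r < 1) :
    Smooth1PeriodicC (HH σ r t) := by
  refine ⟨?_, fun s => ?_⟩
  · unfold HH
    refine ContDiff.inv ?_ (fun s => aux_HH_ne σ r t s hr hr1)
    refine contDiff_const.sub (contDiff_const.mul ?_)
    exact (aux_fe_contDiff σ).comp (contDiff_const.sub contDiff_id)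
  · unfold HH
    have := (aux_fe_smooth σ).2 (t - (s + 1))
    rw [← this]
    congr 4
    ring

lemma aux_fe_pow (σ : ℤ) (m : ℕ) (t : ℝ) : fe σ t ^ m = fe (σ * m) t := by
  unfold fe
  rw [← Complex.exp_nat_mul]
  congr 1; push_cast; ring

lemma aux_fe_sub (σ : ℤ) (s t : ℝ) : fe σ (t - s) = fe σ t * fe (-σ) s := by
  unfold fe
  rw [← Complex.exp_add]
  congr 1; push_cast; ring

lemma aux_fc_HH (σ : ℤ) (r t : ℝ) (hr : 0 ≤ r) (hr1 : r < 1) (n : ℤ) :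
    HasSum (fun m : ℕ => ((r : ℂ) * fe σ t) ^ m * (if n = σ * m then 1 else 0))
      (fc n (HH σ r t)) := by
  have h := intervalIntegral.hasSum_integral_of_dominated_convergence (a := (0 : ℝ)) (b := 1)
    (μ := volume)
    (F := fun (m : ℕ) (s : ℝ) => ((r : ℂ) * fe σ (t - s)) ^ m * fe n s)
    (f := fun s => HH σ r t s * fe n s) (bound := fun m _ => r ^ m)
    (fun m => by
      refine Continuous.aestronglyMeasurable ?_
      have h1 := aux_fe_cont n
      have h2 : Continuous fun s => fe σ (t - s) := (aux_fe_cont σ).comp (by fun_prop)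
      fun_prop)
    (fun m => Eventually.of_forall fun s _ => by
      simp [aux_fe_norm, abs_of_nonneg hr])
    (Eventually.of_forall fun s _ => summable_geometric_of_lt_one hr hr1)
    (by simp)
    (Eventually.of_forall fun s _ => by
      refine HasSum.mul_right _ ?_
      refine hasSum_geometric_of_norm_lt_one ?_
      simpa [aux_fe_norm, abs_of_nonneg hr] using hr1)
  refine h.congr_fun ?_
  intro m
  have : ∀ s, ((r : ℂ) * fe σ (t - s)) ^ m * fe n s
      = ((r : ℂ) * fe σ t) ^ m * (fe (-(σ * m)) s * fe n s) := by
    intro s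
    rw [aux_fe_sub, ← mul_assoc, mul_pow (_ * _) (fe (-σ) s), aux_fe_pow (-σ), neg_mul, mul_assoc]
  simp_rw [this]
  rw [intervalIntegral.integral_const_mul]
  have h3 := aux_fc_fe n (-(σ * m))
  unfold fc at h3
  rw [h3, neg_neg]

lemma aux_u_HH {Y : Type*} [NormedAddCommGroup Y] [NormedSpace ℂ Y]
    {u : (ℝ → ℂ) → Y} (hu : IsPeriodicDistributionC u) (σ : ℤ) (hσ : σ ≠ 0)
    (r t : ℝ) (hr : 0 ≤ r) (hr1 : r < 1) :
    HasSum (fun m : ℕ => ((r : ℂ) * fe σ t) ^ m • u (fe (-(σ * m)))) (u (HH σ r t)) := by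
  have h := aux_repr hu (aux_HH_smooth σ r t hr hr1)
  have hinj : Function.Injective (fun m : ℕ => σ * (m : ℤ)) := by
    intro a b hab
    have := mul_left_cancel₀ hσ hab
    exact_mod_cast this
  have hz : ∀ x ∉ Set.range (fun m : ℕ => σ * (m : ℤ)), fc x (HH σ r t) • u (fe (-x)) = 0 := by
    intro x hx
    have h1 := aux_fc_HH σ r t hr hr1 x
    have h2 : fc x (HH σ r t) = 0 := by
      refine h1.unique ?_
      convert hasSum_zero with m
      rw [if_neg, mul_zero]
      intro hxm
      exact hx ⟨m, hxm.symm⟩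
    rw [h2, zero_smul]
  rw [← hinj.hasSum_iff hz] at h
  refine h.congr_fun ?_
  intro m
  have h1 := aux_fc_HH σ r t hr hr1 (σ * m)
  have h2 : fc (σ * m) (HH σ r t) = ((r : ℂ) * fe σ t) ^ m := by
    refine h1.unique ?_
    have := hasSum_ite_eq m (((r : ℂ) * fe σ t) ^ m)
    refine this.congr_fun ?_
    intro k
    by_cases hk : k = m
    · subst hk; simp
    · have : ¬ (σ * (m : ℤ) = σ * k) := by
        intro h; exact hk (hinj h).symm
      rw [if_neg hk, if_neg this, mul_zero]
  simp [Function.comp, h2]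

section ps
variable {Y : Type*} [NormedAddCommGroup Y] [NormedSpace ℂ Y]

def PBN (a : ℕ → Y) : Prop := ∃ (N : ℕ) (C : ℝ), 0 ≤ C ∧ ∀ n : ℕ, ‖a n‖ ≤ C * ((n : ℝ) + 1) ^ N

def psum (a : ℕ → Y) (z : ℂ) : Y := ∑' n : ℕ, z ^ n • a n

def coefN (F : ℂ → Y) (n : ℕ) : Y := ((n.factorial : ℂ))⁻¹ • iteratedDeriv n F 0

def idxN : ℤ → ℕ
  | Int.ofNat n => 2 * n
  | Int.negSucc n => 2 * n + 1

lemma aux_idx_le (n : ℤ) : (idxN n : ℝ) + 1 ≤ 2 * (|(n : ℝ)| + 1) := by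
  rcases n with n | n
  · simp [idxN]
    linarith
  · simp only [idxN, Int.cast_negSucc]
    rw [abs_neg, abs_of_nonneg (by positivity)]
    push_cast; linarith

lemma aux_PBZ {a : ℕ → Y} (ha : PBN a) : PBZ (fun n => a (idxN n)) := by
  obtain ⟨N, C, hC, h⟩ := ha
  refine ⟨N, C * 2 ^ N, by positivity, fun n => ?_⟩
  refine (h _).trans ?_
  rw [mul_assoc, ← mul_pow]
  gcongr
  exact aux_idx_le n

lemma aux_PBN_even {a : ℕ → Y} (ha : PBN a) : PBN (fun n => a (2 * n)) := by
  obtain ⟨N, C, hC, h⟩ := ha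
  refine ⟨N, C * 2 ^ N, by positivity, fun n => ?_⟩
  refine (h _).trans ?_
  rw [mul_assoc, ← mul_pow]
  gcongr
  push_cast; linarith

lemma aux_PBN_odd {a : ℕ → Y} (ha : PBN a) : PBN (fun n => a (2 * n + 1)) := by
  obtain ⟨N, C, hC, h⟩ := ha
  refine ⟨N, C * 2 ^ N, by positivity, fun n => ?_⟩
  refine (h _).trans ?_
  rw [mul_assoc, ← mul_pow]
  gcongr
  push_cast; linarith

lemma aux_geom (N : ℕ) (r : ℝ) (hr : 0 ≤ r) (hr1 : r < 1) :
    Summable (fun n : ℕ => r ^ n * ((n : ℝ) + 1) ^ N) := by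
  set q := (1 + r) / 2 with hq
  have hq0 : 0 < q := by linarith
  have hq1 : q < 1 := by linarith
  have h1 := (summable_nat_add_iff 1).2 (summable_pow_mul_geometric_of_norm_lt_one N
    (r := q) (by rw [Real.norm_eq_abs, abs_of_pos hq0]; exact hq1))
  refine Summable.of_nonneg_of_le (fun n => by positivity) (fun n => ?_) (h1.mul_left q⁻¹)
  have : q⁻¹ * (((n + 1 : ℕ) : ℝ) ^ N * q ^ (n + 1)) = q ^ n * ((n : ℝ) + 1) ^ N := by
    push_cast
    field_simp
    ring
  rw [this]
  gcongr
  linarith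

lemma aux_ps_bound {a : ℕ → Y} {N : ℕ} {C : ℝ} (ha : ∀ n : ℕ, ‖a n‖ ≤ C * ((n : ℝ) + 1) ^ N)
    (r : ℝ) (z : ℂ) (hz : ‖z‖ ≤ r) (n : ℕ) :
    ‖z ^ n • a n‖ ≤ C * (r ^ n * ((n : ℝ) + 1) ^ N) := by
  rw [norm_smul, norm_pow]
  have h0 := norm_nonneg z
  calc ‖z‖ ^ n * ‖a n‖ ≤ r ^ n * (C * ((n : ℝ) + 1) ^ N) := by
        have hr0 : 0 ≤ r := h0.trans hz
        gcongr
        exact ha n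
    _ = _ := by ring

variable [CompleteSpace Y]

lemma aux_ps_hasSum {a : ℕ → Y} (ha : PBN a) (z : ℂ) (hz : ‖z‖ < 1) :
    HasSum (fun n : ℕ => z ^ n • a n) (psum a z) := by
  obtain ⟨N, C, hC, h⟩ := ha
  exact (Summable.of_norm_bounded ((aux_geom N ‖z‖ (norm_nonneg z) hz).mul_left C)
    (aux_ps_bound h ‖z‖ z le_rfl)).hasSum

lemma aux_ps_diff {a : ℕ → Y} (ha : PBN a) : DifferentiableOn ℂ (psum a) (Metric.ball 0 1) := by
  obtain ⟨N, C, hC, h⟩ := ha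
  intro z hz
  have hz1 : ‖z‖ < 1 := by simpa using hz
  obtain ⟨ρ, hρ, hρ1⟩ := exists_between hz1
  have hρ0 : 0 ≤ ρ := (norm_nonneg z).trans hρ.le
  have h1 := Complex.differentiableOn_tsum_of_summable_norm (U := Metric.ball (0 : ℂ) ρ)
    (F := fun n z => z ^ n • a n) ((aux_geom N ρ hρ0 hρ1).mul_left C)
    (fun n => by fun_prop) Metric.isOpen_ball
    (fun n w hw => aux_ps_bound h ρ w (by simpa using (Metric.mem_ball.1 hw).le) n)
  have h2 := (h1 z (by simpa using hρ)).differentiableAt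
    (Metric.isOpen_ball.mem_nhds (by simpa using hρ))
  exact h2.differentiableWithinAt

lemma aux_taylor {F : ℂ → Y} (hF : DifferentiableOn ℂ F (Metric.ball 0 1)) (z : ℂ) (hz : ‖z‖ < 1) :
    HasSum (fun n : ℕ => z ^ n • coefN F n) (F z) := by
  have h := Complex.hasSum_taylorSeries_on_ball hF (z := z) (by simpa using hz)
  refine h.congr_fun fun n => ?_
  unfold coefN
  rw [sub_zero, smul_comm]

def serN (b : ℕ → Y) : FormalMultilinearSeries ℂ ℂ Y :=
  fun n => ContinuousMultilinearMap.mkPiRing ℂ (Fin n) (b n)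

lemma aux_serN_coeff (b : ℕ → Y) (n : ℕ) : (serN b).coeff n = b n := by
  simp [serN, FormalMultilinearSeries.coeff]

lemma aux_coef_ps {a : ℕ → Y} (ha : PBN a) : coefN (psum a) = a := by
  have key : ∀ b : ℕ → Y, (∀ z : ℂ, ‖z‖ < 1 → HasSum (fun n => z ^ n • b n) (psum a z)) →
      HasFPowerSeriesAt (psum a) (serN b) 0 := by
    intro b hb
    rw [hasFPowerSeriesAt_iff]
    filter_upwards [Metric.ball_mem_nhds (0 : ℂ) one_pos] with z hz
    have := hb z (by simpa using hz)
    simpa [aux_serN_coeff] using this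
  have h1 := key a (aux_ps_hasSum ha)
  have h2 := key (coefN (psum a)) (aux_taylor (aux_ps_diff ha))
  have h3 := h2.eq_formalMultilinearSeries h1
  funext n
  have h4 := congrArg (fun q : FormalMultilinearSeries ℂ ℂ Y => q.coeff n) h3
  simpa [aux_serN_coeff] using h4

lemma aux_coef_PBN {F : ℂ → Y} (p : ℝ) (hp : 0 < p) (hp1 : p ≤ 1) (hF : memHpD p F) :
    PBN (coefN F) := by
  obtain ⟨hd, B, hB, hBF⟩ := hF
  set K := B.toReal with hK
  have hK0 : 0 ≤ K := ENNReal.toReal_nonneg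
  have hHL := aux_HL F hd p hp hp1 K hK0 (fun ρ h1 h2 => by
    rw [hK, ENNReal.ofReal_toReal hB.ne]; exact hBF ρ (by linarith) h2)
  obtain ⟨N, hN⟩ := exists_nat_ge (1/p)
  set D := (2 : ℝ) ^ (1/p) * K with hD
  have hD0 : 0 ≤ D := by positivity
  refine ⟨N, Real.exp 1 * (D ^ (1/p) * 2 ^ N), by positivity, fun n => ?_⟩
  set R : ℝ := ((n : ℝ) + 1) / (n + 2) with hR
  have hn2 : (0 : ℝ) < n + 2 := by positivity
  have hR0 : 0 < R := by positivity
  have hR1 : 1 - R = 1 / (n + 2) := by rw [hR]; field_simp; ring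
  have hRlt : R < 1 := by
    have : 0 < 1 / ((n : ℝ) + 2) := by positivity
    linarith
  have hM : ∀ z ∈ Metric.sphere (0 : ℂ) R, ‖F z‖ ≤ D ^ (1/p) * (2 ^ N * ((n : ℝ) + 1) ^ N) := by
    intro z hz
    have hzR : ‖z‖ = R := by simpa using hz
    have h1 := hHL z (by rw [hzR]; exact hRlt)
    rw [hzR, hR1, one_div, inv_mul_le_iff₀ hn2] at h1
    have h2 : ‖F z‖ ≤ (((n : ℝ) + 2) * D) ^ (1/p) := by
      calc ‖F z‖ = (‖F z‖ ^ p) ^ (1/p) := by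
            rw [← Real.rpow_mul (norm_nonneg _), mul_one_div_cancel hp.ne', Real.rpow_one]
        _ ≤ _ := by gcongr
    refine h2.trans ?_
    rw [Real.mul_rpow hn2.le hD0, mul_comm, ← mul_pow]
    gcongr
    calc ((n : ℝ) + 2) ^ (1/p) ≤ ((n : ℝ) + 2) ^ (N : ℝ) := by
          apply Real.rpow_le_rpow_of_exponent_le _ hN
          have : (0 : ℝ) ≤ n := by positivity
          linarith
      _ = ((n : ℝ) + 2) ^ N := Real.rpow_natCast _ _
      _ ≤ _ := by
        gcongr
        have : (0 : ℝ) ≤ n := by positivity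
        linarith
  have hcl : DiffContOnCl ℂ F (Metric.ball 0 R) :=
    (hd.mono (Metric.closedBall_subset_ball hRlt)).diffContOnCl_ball le_rfl
  have h3 := Complex.norm_iteratedDeriv_le_of_forall_mem_sphere_norm_le n hR0 hcl hM
  have hfac : (0 : ℝ) < n.factorial := by exact_mod_cast n.factorial_pos
  have h4 : (R ^ n)⁻¹ ≤ Real.exp 1 := by
    have h5 : R⁻¹ ≤ Real.exp (1 / ((n : ℝ) + 1)) := by
      have := Real.add_one_le_exp (1 / ((n : ℝ) + 1))
      refine le_trans (le_of_eq ?_) this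
      rw [hR]; field_simp; ring
    rw [← inv_pow]
    calc R⁻¹ ^ n ≤ (Real.exp (1 / ((n : ℝ) + 1))) ^ n := by gcongr
      _ = Real.exp (n * (1 / ((n : ℝ) + 1))) := (Real.exp_nat_mul _ _).symm
      _ ≤ Real.exp 1 := by
        apply Real.exp_le_exp.2
        rw [mul_one_div, div_le_one (by positivity)]
        linarith
  unfold coefN
  rw [norm_smul, norm_inv, Complex.norm_natCast, inv_mul_le_iff₀ hfac]
  refine h3.trans ?_
  rw [mul_div_assoc, div_eq_mul_inv]
  refine mul_le_mul_of_nonneg_left ?_ hfac.le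
  calc D ^ (1/p) * (2 ^ N * ((n : ℝ) + 1) ^ N) * (R ^ n)⁻¹
      ≤ D ^ (1/p) * (2 ^ N * ((n : ℝ) + 1) ^ N) * Real.exp 1 := by gcongr
    _ = _ := by ring

lemma aux_F_split {F : ℂ → Y} {a : ℕ → Y} (ha : PBN a)
    (hF : ∀ z : ℂ, ‖z‖ < 1 → HasSum (fun n => z ^ n • a n) (F z)) (z : ℂ) (hz : ‖z‖ < 1) :
    F z = psum (fun n => a (2 * n)) (z ^ 2) + z • psum (fun n => a (2 * n + 1)) (z ^ 2) := by
  have hz2 : ‖z ^ 2‖ < 1 := by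
    rw [norm_pow]; exact pow_lt_one₀ (norm_nonneg z) hz (by norm_num)
  have h1 := aux_ps_hasSum (aux_PBN_even ha) (z ^ 2) hz2
  have h2 := (aux_ps_hasSum (aux_PBN_odd ha) (z ^ 2) hz2).const_smul z
  have h3 := HasSum.even_add_odd (f := fun n => z ^ n • a n)
    (h1.congr_fun fun n => by rw [pow_mul]) (h2.congr_fun fun n => by
      rw [smul_smul, pow_succ', pow_mul])
  exact (hF z hz).unique h3

end ps

lemma aux_circlePt_fe (r t : ℝ) : circlePt r t = r * fe 1 t := by
  unfold circlePt fe
  congr 2; push_cast; ring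

lemma aux_circlePt_fe' (r t : ℝ) : circlePt r (-t) = r * fe (-1) t := by
  unfold circlePt fe
  congr 2; push_cast; ring

lemma aux_HH_conj (r t s : ℝ) : HH (-1) r t s = (starRingEnd ℂ) (HH 1 r t s) := by
  unfold HH fe
  simp only [map_inv₀, map_sub, map_mul, map_one, Complex.conj_ofReal, ← Complex.exp_conj,
    Complex.conj_I]
  congr 4
  simp
  left
  exact (map_ofNat (starRingEnd ℂ) 2).symm

lemma aux_kernel (r t s : ℝ) (hr : 0 ≤ r) (hr1 : r < 1) :
    ((1 : ℂ) + circlePt r (t - s)) / ((1 : ℂ) - circlePt r (t - s)) = 2 * HH 1 r t s - 1 := by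
  have h := aux_HH_ne 1 r t s hr hr1
  rw [aux_circlePt_fe]
  unfold HH
  field_simp
  ring

lemma aux_P_eq (r t : ℝ) (hr : 0 ≤ r) (hr1 : r < 1) :
    (fun s => (poissonP r (t - s) : ℂ)) = HH 1 r t + (HH (-1) r t + (-1 : ℂ) • fe 0) := by
  funext s
  unfold poissonP
  rw [aux_kernel r t s hr hr1]
  simp only [Pi.add_apply, Pi.smul_apply, aux_fe_zero, aux_HH_conj]
  rw [← add_assoc, Complex.add_conj]
  simp [sub_eq_add_neg]

lemma aux_Q_eq (r t : ℝ) (hr : 0 ≤ r) (hr1 : r < 1) :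
    (fun s => (poissonQ r (t - s) : ℂ)) = (-Complex.I) • (HH 1 r t + (-1 : ℂ) • HH (-1) r t) := by
  funext s
  unfold poissonQ
  rw [aux_kernel r t s hr hr1]
  simp only [Pi.add_apply, Pi.smul_apply, aux_HH_conj, smul_eq_mul, neg_one_mul,
    ← sub_eq_add_neg]
  rw [Complex.sub_conj]
  ring_nf
  simp [mul_comm]

lemma aux_conv {Y : Type*} [NormedAddCommGroup Y] [NormedSpace ℂ Y] [CompleteSpace Y]
    {u : (ℝ → ℂ) → Y} (hu : IsPeriodicDistributionC u) {a : ℕ → Y} (ha : PBN a)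
    (hua : ∀ n : ℤ, u (fe (-n)) = a (idxN n)) (r t : ℝ) (hr : 0 ≤ r) (hr1 : r < 1) :
    pConvC u r t = psum (fun n => a (2 * n)) (circlePt r t)
      + circlePt r (-t) • psum (fun n => a (2 * n + 1)) (circlePt r (-t)) ∧
    qConvC u r t = (-Complex.I) • (psum (fun n => a (2 * n)) (circlePt r t) - a 0
      - circlePt r (-t) • psum (fun n => a (2 * n + 1)) (circlePt r (-t))) := by
  have hz : ‖circlePt r t‖ < 1 := by rw [aux_circlePt_norm r t hr]; exact hr1
  have hz' : ‖circlePt r (-t)‖ < 1 := by rw [aux_circlePt_norm r (-t) hr]; exact hr1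
  have h1 : u (HH 1 r t) = psum (fun n => a (2 * n)) (circlePt r t) := by
    refine (aux_u_HH hu 1 one_ne_zero r t hr hr1).unique ?_
    refine (aux_ps_hasSum (aux_PBN_even ha) _ hz).congr_fun fun n => ?_
    rw [hua, aux_circlePt_fe, one_mul]
    rfl
  have h0 : u (fe 0) = a 0 := by
    have := hua 0
    simpa [idxN] using this
  have h2 : u (HH (-1) r t) = a 0
      + circlePt r (-t) • psum (fun n => a (2 * n + 1)) (circlePt r (-t)) := by
    refine (aux_u_HH hu (-1) (by norm_num) r t hr hr1).unique ?_
    have h3 := (aux_ps_hasSum (aux_PBN_odd ha) _ hz').const_smul (circlePt r (-t))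
    rw [← hasSum_nat_add_iff' 1]
    simp only [Finset.range_one, Finset.sum_singleton, pow_zero, one_smul, Nat.cast_zero, mul_zero,
      neg_zero, h0, add_sub_cancel_left]
    refine h3.congr_fun fun n => ?_
    rw [hua, aux_circlePt_fe', smul_smul, pow_succ',
      show (-1 : ℤ) * ((n + 1 : ℕ) : ℤ) = Int.negSucc n by rw [Int.negSucc_eq]; push_cast; ring]
    rfl
  have s1 := aux_HH_smooth 1 r t hr hr1
  have s2 := aux_HH_smooth (-1) r t hr hr1
  have s0 := aux_fe_smooth 0
  constructor
  · unfold pConvC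
    rw [aux_P_eq r t hr hr1, hu.1 _ _ s1 (aux_sm_add s2 (aux_sm_smul _ s0)),
      hu.1 _ _ s2 (aux_sm_smul _ s0), hu.2.1 _ _ s0, h1, h2, h0]
    simp
  · unfold qConvC
    rw [aux_Q_eq r t hr hr1, hu.2.1 _ _ (aux_sm_add s1 (aux_sm_smul _ s2)),
      hu.1 _ _ s1 (aux_sm_smul _ s2), hu.2.1 _ _ s2, h1, h2]
    congr 1
    rw [neg_one_smul]; abel

def cpt (r : ℝ) (x : UnitAddCircle) : ℂ := (r : ℂ) * (AddCircle.toCircle x : ℂ)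

lemma aux_cpt_coe (r t : ℝ) : circlePt r t = cpt r (t : UnitAddCircle) := by
  unfold circlePt cpt
  rw [AddCircle.toCircle_apply_mk, Circle.coe_exp]
  congr 2; push_cast; ring

lemma aux_cpt_norm (r : ℝ) (hr : 0 ≤ r) (x : UnitAddCircle) : ‖cpt r x‖ = r := by
  unfold cpt; rw [norm_mul, Circle.norm_coe]; simp [abs_of_nonneg hr]

lemma aux_cpt_cont (r : ℝ) : Continuous (cpt r) := by
  unfold cpt
  exact continuous_const.mul (continuous_subtype_val.comp AddCircle.continuous_toCircle)

lemma aux_cpt_sq (r : ℝ) (x : UnitAddCircle) : cpt (r ^ 2) (2 • x) = cpt r x ^ 2 := by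
  unfold cpt
  rw [AddCircle.toCircle_nsmul]
  push_cast; ring

lemma aux_cpt_half (r : ℝ) (x : UnitAddCircle) : cpt r (x + ((1/2 : ℝ) : UnitAddCircle)) = - cpt r x := by
  unfold cpt
  rw [AddCircle.toCircle_add, AddCircle.toCircle_apply_mk, Circle.coe_mul, Circle.coe_exp]
  have : ((2 * Real.pi / 1 * (1/2) : ℝ) : ℂ) * Complex.I = Real.pi * Complex.I := by
    push_cast; ring
  rw [this, Complex.exp_pi_mul_I]
  ring

lemma aux_lint (f : UnitAddCircle → ℝ≥0∞) :
    ∫⁻ t in I₀, f (t : UnitAddCircle) = ∫⁻ x, f x := by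
  have h := UnitAddCircle.lintegral_preimage (-(1 : ℝ)/2) f
  rw [← h]
  unfold I₀
  rw [show (-(1 : ℝ)/2 + 1) = 1/2 by norm_num, restrict_Ico_eq_restrict_Ioc]

lemma aux_dbl (f : UnitAddCircle → ℝ≥0∞) (hf : Measurable f) :
    ∫⁻ x, f (2 • x) = ∫⁻ x, f x := by
  have h : Ergodic (fun y : UnitAddCircle => 2 • y) volume := AddCircle.ergodic_nsmul (by norm_num)
  exact h.toMeasurePreserving.lintegral_comp hf

lemma aux_one : ∫⁻ _ : UnitAddCircle, (1 : ℝ≥0∞) = 1 := by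
  simp

section key
variable {Y : Type*} [NormedAddCommGroup Y] [NormedSpace ℂ Y]

def NN (p : ℝ) (y : Y) : ℝ≥0∞ := ‖y‖ₑ ^ p

lemma aux_NN_add (p : ℝ) (hp : 0 < p) (hp1 : p ≤ 1) (x y : Y) : NN p (x + y) ≤ NN p x + NN p y := by
  unfold NN
  refine le_trans ?_ (ENNReal.rpow_add_le_add_rpow _ _ hp.le hp1)
  gcongr
  exact enorm_add_le x y

lemma aux_NN_neg (p : ℝ) (x : Y) : NN p (-x) = NN p x := by
  unfold NN; rw [enorm_neg]

lemma aux_NN_sub (p : ℝ) (hp : 0 < p) (hp1 : p ≤ 1) (x y : Y) : NN p (x - y) ≤ NN p x + NN p y := by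
  rw [sub_eq_add_neg, ← aux_NN_neg p y]
  exact aux_NN_add p hp hp1 _ _

lemma aux_NN_smul1 (p : ℝ) (hp : 0 < p) (c : ℂ) (hc : ‖c‖ ≤ 1) (x : Y) :
    NN p (c • x) ≤ NN p x := by
  unfold NN
  gcongr
  rw [enorm_smul]
  have : ‖c‖ₑ ≤ 1 := by
    rw [← ofReal_norm]; exact ENNReal.ofReal_le_one.2 hc
  calc ‖c‖ₑ * ‖x‖ₑ ≤ 1 * ‖x‖ₑ := by gcongr
    _ = _ := one_mul _

lemma aux_NN_smul4 (p : ℝ) (hp : 0 < p) (hp1 : p ≤ 1) (c : ℂ) (hc : ‖c‖ ≤ 4) (x : Y) :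
    NN p (c • x) ≤ 4 * NN p x := by
  unfold NN
  rw [enorm_smul, ENNReal.mul_rpow_of_nonneg _ _ hp.le]
  gcongr
  have : ‖c‖ₑ ≤ 4 := by
    rw [← ofReal_norm]
    exact (ENNReal.ofReal_le_ofReal hc).trans (by simp)
  calc ‖c‖ₑ ^ p ≤ 4 ^ p := by gcongr
    _ ≤ 4 ^ (1 : ℝ) := ENNReal.rpow_le_rpow_of_exponent_le (by norm_num) hp1
    _ = 4 := ENNReal.rpow_one 4

lemma aux_hp_cpt (p : ℝ) (F : ℂ → Y) (r : ℝ) : hpIntegral p F r = ∫⁻ x, NN p (F (cpt r x)) := by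
  unfold hpIntegral
  rw [← aux_lint]
  refine lintegral_congr fun t => ?_
  rw [aux_cpt_coe]; rfl

lemma aux_meas (p : ℝ) {G : ℂ → Y} (hG : ContinuousOn G (Metric.ball 0 1)) (r : ℝ) (hr : 0 ≤ r)
    (hr1 : r < 1) : Measurable (fun x => NN p (G (cpt r x))) := by
  have h1 : Continuous (fun x => G (cpt r x)) :=
    hG.comp_continuous (aux_cpt_cont r) fun x => by simp [aux_cpt_norm r hr, hr1]
  unfold NN
  exact h1.enorm.measurable.pow_const p

/-- the p-integral of the distribution at radius `r`. -/
def hpT (p : ℝ) (u : (ℝ → ℂ) → Y) (r : ℝ) : ℝ≥0∞ :=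
  ∫⁻ t in I₀, ((‖pConvC u r t‖₊ : ℝ≥0∞) ^ p + (‖qConvC u r t‖₊ : ℝ≥0∞) ^ p)

lemma aux_hpT_le (p : ℝ) (hp : 0 < p) (u : (ℝ → ℂ) → Y) (r : ℝ) (hr : 0 ≤ r) (hr1 : r < 1) :
    hpT p u r ≤ qHpT p u ^ p := by
  have h : hpT p u r ^ (1/p) ≤ qHpT p u :=
    le_iSup (fun r : Set.Ico (0 : ℝ) 1 => hpT p u r.1 ^ (1/p)) ⟨r, hr, hr1⟩
  calc hpT p u r = (hpT p u r ^ (1/p)) ^ p := by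
        rw [← ENNReal.rpow_mul, one_div_mul_cancel hp.ne', ENNReal.rpow_one]
    _ ≤ _ := by gcongr

lemma aux_hpD_le (p : ℝ) (hp : 0 < p) (F : ℂ → Y) (r : ℝ) (hr : 0 ≤ r) (hr1 : r < 1) :
    hpIntegral p F r ≤ qHpD p F ^ p := by
  have h : hpIntegral p F r ^ (1/p) ≤ qHpD p F :=
    le_iSup (fun r : Set.Ico (0 : ℝ) 1 => hpIntegral p F r.1 ^ (1/p)) ⟨r, hr, hr1⟩
  calc hpIntegral p F r = (hpIntegral p F r ^ (1/p)) ^ p := by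
        rw [← ENNReal.rpow_mul, one_div_mul_cancel hp.ne', ENNReal.rpow_one]
    _ ≤ _ := by gcongr

lemma aux_root (p : ℝ) (hp : 0 < p) (x K q : ℝ≥0∞) (h : x ≤ K * q ^ p) :
    x ^ (1/p) ≤ K ^ (1/p) * q := by
  calc x ^ (1/p) ≤ (K * q ^ p) ^ (1/p) := by gcongr
    _ = _ := by
      rw [ENNReal.mul_rpow_of_nonneg _ _ (by positivity), ← ENNReal.rpow_mul,
        mul_one_div_cancel hp.ne', ENNReal.rpow_one]

variable [CompleteSpace Y]

/-- ENNReal version of the Hardy-Littlewood bound. -/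
lemma aux_HL_E (F : ℂ → Y) (hF : DifferentiableOn ℂ F (Metric.ball 0 1)) (p : ℝ) (hp : 0 < p)
    (hp1 : p ≤ 1) (K : ℝ≥0∞)
    (hK : ∀ ρ : ℝ, 1/4 ≤ ρ → ρ < 1 → hpIntegral p F ρ ≤ K) (z : ℂ) (hz : ‖z‖ ≤ 1/4) :
    NN p (F z) ≤ 2 * 2 ^ (1/p) * K := by
  by_cases hKt : K = ⊤
  · subst hKt
    rw [ENNReal.mul_top]
    · exact le_top
    · exact mul_ne_zero (by norm_num) (ENNReal.rpow_pos (by norm_num) (by norm_num)).ne'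
  have h := aux_HL F hF p hp hp1 K.toReal ENNReal.toReal_nonneg
    (by rwa [ENNReal.ofReal_toReal hKt]) z (by linarith)
  have h0 : 0 ≤ ‖F z‖ ^ p := by positivity
  have h1 : ‖F z‖ ^ p ≤ 2 * (2 ^ (1/p) * K.toReal) := by nlinarith
  unfold NN
  rw [← ofReal_norm, ENNReal.ofReal_rpow_of_nonneg (norm_nonneg _) hp.le]
  refine (ENNReal.ofReal_le_ofReal h1).trans (le_of_eq ?_)
  rw [ENNReal.ofReal_mul (by norm_num), ENNReal.ofReal_mul (by positivity),
    ENNReal.ofReal_toReal hKt, ← ENNReal.ofReal_rpow_of_pos (by norm_num), mul_assoc]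
  simp

lemma aux_hpT_cpt {u : (ℝ → ℂ) → Y} (hu : IsPeriodicDistributionC u) {a : ℕ → Y} (ha : PBN a)
    (hua : ∀ n : ℤ, u (fe (-n)) = a (idxN n)) (p r : ℝ) (hr : 0 ≤ r) (hr1 : r < 1) :
    hpT p u r = ∫⁻ x, (NN p (psum (fun n => a (2 * n)) (cpt r x)
        + cpt r (-x) • psum (fun n => a (2 * n + 1)) (cpt r (-x)))
      + NN p ((-Complex.I) • (psum (fun n => a (2 * n)) (cpt r x) - a 0
      - cpt r (-x) • psum (fun n => a (2 * n + 1)) (cpt r (-x))))) := by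
  unfold hpT
  rw [← aux_lint]
  refine lintegral_congr fun t => ?_
  obtain ⟨h1, h2⟩ := aux_conv hu ha hua r t hr hr1
  rw [h1, h2, aux_cpt_coe, aux_cpt_coe]
  rfl

lemma aux_upper {u : (ℝ → ℂ) → Y} (hu : IsPeriodicDistributionC u) {a : ℕ → Y} (ha : PBN a)
    (hua : ∀ n : ℤ, u (fe (-n)) = a (idxN n)) (F : ℂ → Y)
    (hFd : DifferentiableOn ℂ F (Metric.ball 0 1))
    (hF : ∀ z : ℂ, ‖z‖ < 1 → HasSum (fun n => z ^ n • a n) (F z))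
    (p : ℝ) (hp : 0 < p) (hp1 : p ≤ 1) (r : ℝ) (hr : 0 ≤ r) (hr1 : r < 1) :
    hpT p u r ≤ (8 + 2 * 2 ^ (1/p)) * qHpD p F ^ p := by
  set A := psum (fun n => a (2 * n)) with hA
  set B := psum (fun n => a (2 * n + 1)) with hB
  have hAd := aux_ps_diff (aux_PBN_even ha)
  have hBd := aux_ps_diff (aux_PBN_odd ha)
  rw [← hA] at hAd
  rw [← hB] at hBd
  have hCc : ContinuousOn (fun z => z • B z) (Metric.ball 0 1) :=
    continuousOn_id.smul hBd.continuousOn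
  have hmA := aux_meas p hAd.continuousOn r hr hr1
  have hmC := aux_meas p hCc r hr hr1
  set K := qHpD p F ^ p with hK
  have hF0 : F 0 = a 0 := by
    have h1 := hF 0 (by simp)
    refine h1.unique ?_
    have h2 := hasSum_single (f := fun n : ℕ => (0 : ℂ) ^ n • a n) 0 (by
      intro n hn; simp [hn])
    simpa using h2
  have ha0 : NN p (a 0) ≤ 2 * 2 ^ (1/p) * K := by
    rw [← hF0]
    exact aux_HL_E F hFd p hp hp1 K
      (fun ρ h1 h2 => aux_hpD_le p hp F ρ (by linarith) h2) 0 (by simp)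
  -- pass to square root
  set ρ := Real.sqrt r with hρ
  have hρ0 : 0 ≤ ρ := Real.sqrt_nonneg r
  have hρ2 : ρ ^ 2 = r := Real.sq_sqrt hr
  have hρ1 : ρ < 1 := by
    rw [hρ, Real.sqrt_lt' one_pos]; simpa using hr1
  have hmF := aux_meas p hFd.continuousOn ρ hρ0 hρ1
  have hsum : ∫⁻ x, (NN p (F (cpt ρ x)) + NN p (F (- cpt ρ x))) ≤ 2 * K := by
    rw [lintegral_add_left hmF]
    have h1 : ∫⁻ x, NN p (F (- cpt ρ x)) = ∫⁻ x, NN p (F (cpt ρ x)) := by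
      simp_rw [← aux_cpt_half]
      exact lintegral_add_right_eq_self (fun x => NN p (F (cpt ρ x))) _
    rw [h1, ← aux_hp_cpt, two_mul]
    have := aux_hpD_le p hp F ρ hρ0 hρ1
    gcongr
  have hsp : ∀ x, F (cpt ρ x) = A (cpt ρ x ^ 2) + cpt ρ x • B (cpt ρ x ^ 2) := fun x =>
    aux_F_split ha hF _ (by rw [aux_cpt_norm ρ hρ0]; exact hρ1)
  have hsp' : ∀ x, F (-cpt ρ x) = A (cpt ρ x ^ 2) - cpt ρ x • B (cpt ρ x ^ 2) := fun x => by
    have := aux_F_split ha hF (-cpt ρ x) (by rw [norm_neg, aux_cpt_norm ρ hρ0]; exact hρ1)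
    rw [this, neg_sq, neg_smul, sub_eq_add_neg]
  have hIA : ∫⁻ x, NN p (A (cpt r x)) ≤ 2 * K := by
    rw [← aux_dbl _ hmA]
    refine le_trans (lintegral_mono fun x => ?_) hsum
    show NN p (A (cpt r (2 • x))) ≤ _
    rw [← hρ2, aux_cpt_sq]
    have h1 : A (cpt ρ x ^ 2) = (1/2 : ℂ) • (F (cpt ρ x) + F (-cpt ρ x)) := by
      rw [hsp, hsp', add_add_sub_cancel, ← two_smul ℂ, smul_smul]; norm_num
    rw [h1]
    exact (aux_NN_smul1 p hp _ (by norm_num) _).trans (aux_NN_add p hp hp1 _ _)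
  have hIC : ∫⁻ x, NN p (cpt r (-x) • B (cpt r (-x))) ≤ 2 * K := by
    rw [lintegral_neg_eq_self (fun x => NN p (cpt r x • B (cpt r x)))]
    rw [← aux_dbl _ hmC]
    refine le_trans (lintegral_mono fun x => ?_) hsum
    show NN p (cpt r (2 • x) • B (cpt r (2 • x))) ≤ _
    rw [← hρ2, aux_cpt_sq]
    have h1 : cpt ρ x ^ 2 • B (cpt ρ x ^ 2)
        = (cpt ρ x / 2 : ℂ) • (F (cpt ρ x) - F (-cpt ρ x)) := by
      rw [hsp, hsp', add_sub_sub_cancel, ← two_smul ℂ, smul_smul, smul_smul]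
      congr 1; ring
    rw [h1]
    refine (aux_NN_smul1 p hp _ ?_ _).trans (aux_NN_sub p hp hp1 _ _)
    rw [norm_div, aux_cpt_norm ρ hρ0]
    norm_num; linarith
  rw [aux_hpT_cpt hu ha hua p r hr hr1]
  calc _ ≤ ∫⁻ x, (2 * NN p (A (cpt r x)) + (2 * NN p (cpt r (-x) • B (cpt r (-x))) + NN p (a 0))) := by
        refine lintegral_mono fun x => ?_
        refine (add_le_add (aux_NN_add p hp hp1 _ _)
          ((aux_NN_smul1 p hp _ (by simp) _).trans ((aux_NN_sub p hp hp1 _ _).trans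
            (add_le_add_left (aux_NN_sub p hp hp1 _ _) _)))).trans (le_of_eq ?_)
        ring
    _ = 2 * (∫⁻ x, NN p (A (cpt r x))) + ((2 * ∫⁻ x, NN p (cpt r (-x) • B (cpt r (-x))))
          + NN p (a 0)) := by
        rw [lintegral_add_left (hmA.const_mul 2), lintegral_add_right _ measurable_const,
          lintegral_const_mul _ hmA, lintegral_const_mul' _ _ (by norm_num)]
        simp
    _ ≤ 2 * (2 * K) + (2 * (2 * K) + 2 * 2 ^ (1/p) * K) := by gcongr
    _ = _ := by ring

lemma aux_lower {u : (ℝ → ℂ) → Y} (hu : IsPeriodicDistributionC u) {a : ℕ → Y} (ha : PBN a)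
    (hua : ∀ n : ℤ, u (fe (-n)) = a (idxN n)) (F : ℂ → Y)
    (hFd : DifferentiableOn ℂ F (Metric.ball 0 1))
    (hF : ∀ z : ℂ, ‖z‖ < 1 → HasSum (fun n => z ^ n • a n) (F z))
    (p : ℝ) (hp : 0 < p) (hp1 : p ≤ 1) (r : ℝ) (hr : 0 ≤ r) (hr1 : r < 1) :
    hpIntegral p F r ≤ (10 + 2 * 2 ^ (1/p) * 10) * qHpT p u ^ p := by
  set A := psum (fun n => a (2 * n)) with hA
  set B := psum (fun n => a (2 * n + 1)) with hB
  have hAd := aux_ps_diff (aux_PBN_even ha)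
  have hBd := aux_ps_diff (aux_PBN_odd ha)
  rw [← hA] at hAd
  rw [← hB] at hBd
  have hCc : ContinuousOn (fun z => z • B z) (Metric.ball 0 1) :=
    continuousOn_id.smul hBd.continuousOn
  set K := qHpT p u ^ p with hK
  have hA0 : A 0 = a 0 := by
    have h1 := aux_ps_hasSum (aux_PBN_even ha) 0 (by simp)
    rw [← hA] at h1
    refine h1.unique ?_
    have h2 := hasSum_single (f := fun n : ℕ => (0 : ℂ) ^ n • a (2 * n)) 0 (by
      intro n hn; simp [hn])
    simpa using h2
  have ha0 : NN p (a 0) ≤ K := by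
    refine le_trans ?_ (aux_hpT_le p hp u 0 le_rfl one_pos)
    rw [aux_hpT_cpt hu ha hua p 0 le_rfl one_pos]
    have h0 : ∀ x, cpt 0 x = 0 := fun x => by simp [cpt]
    simp_rw [h0, ← hA, hA0]
    simp
  have main : ∀ ρ : ℝ, 1/4 ≤ ρ → ρ < 1 → hpIntegral p F ρ ≤ 10 * K := by
    intro ρ hρ4 hρ1
    have hρ0 : 0 ≤ ρ := by linarith
    set s := ρ ^ 2 with hs
    have hs0 : 0 ≤ s := by positivity
    have hs1 : s < 1 := pow_lt_one₀ hρ0 hρ1 (by norm_num)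
    have hmA := aux_meas p hAd.continuousOn s hs0 hs1
    have hmC := aux_meas p hCc s hs0 hs1
    have hT := aux_hpT_le p hp u s hs0 hs1
    rw [← hK, aux_hpT_cpt hu ha hua p s hs0 hs1, ← hA, ← hB] at hT
    set ψ : UnitAddCircle → ℝ≥0∞ := fun x => (NN p (A (cpt s x) + cpt s (-x) • B (cpt s (-x)))
      + NN p ((-Complex.I) • (A (cpt s x) - a 0 - cpt s (-x) • B (cpt s (-x))))) with hψ
    have hψI : ∫⁻ x, (ψ x + NN p (a 0)) ≤ 2 * K := by
      rw [lintegral_add_right _ measurable_const, two_mul]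
      refine add_le_add hT ?_
      simpa using ha0
    have hIA : ∫⁻ x, NN p (A (cpt s x)) ≤ 2 * K := by
      refine le_trans (lintegral_mono fun x => ?_) hψI
      set α := A (cpt s x)
      set β := cpt s (-x) • B (cpt s (-x))
      have h1 : α = (1/2 : ℂ) • ((α + β) + (Complex.I • ((-Complex.I) • (α - a 0 - β))) + a 0) := by
        rw [smul_smul, mul_neg, Complex.I_mul_I, neg_neg, one_smul]
        rw [show α + β + (α - a 0 - β) + a 0 = (2 : ℂ) • α by rw [two_smul]; abel, smul_smul]
        norm_num
      calc NN p α ≤ _ := by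
            conv_lhs => rw [h1]
            exact aux_NN_smul1 p hp _ (by norm_num) _
        _ ≤ _ := aux_NN_add p hp hp1 _ _
        _ ≤ _ := add_le_add_left ((aux_NN_add p hp hp1 _ _).trans
            (add_le_add_right (aux_NN_smul1 p hp _ (by simp) _) _)) _
    have hIC : ∫⁻ x, NN p (cpt s x • B (cpt s x)) ≤ 2 * K := by
      rw [← lintegral_neg_eq_self (fun x => NN p (cpt s x • B (cpt s x)))]
      refine le_trans (lintegral_mono fun x => ?_) hψI
      set α := A (cpt s x)
      set β := cpt s (-x) • B (cpt s (-x))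
      have h1 : β = (1/2 : ℂ) • ((α + β) - (Complex.I • ((-Complex.I) • (α - a 0 - β))) - a 0) := by
        rw [smul_smul, mul_neg, Complex.I_mul_I, neg_neg, one_smul]
        rw [show α + β - (α - a 0 - β) - a 0 = (2 : ℂ) • β by rw [two_smul]; abel, smul_smul]
        norm_num
      calc NN p β ≤ _ := by
            conv_lhs => rw [h1]
            exact aux_NN_smul1 p hp _ (by norm_num) _
        _ ≤ _ := aux_NN_sub p hp hp1 _ _
        _ ≤ _ := add_le_add_left ((aux_NN_sub p hp hp1 _ _).trans
            (add_le_add_right (aux_NN_smul1 p hp _ (by simp) _) _)) _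
    rw [← aux_dbl _ hmA] at hIA
    rw [← aux_dbl _ hmC] at hIC
    rw [aux_hp_cpt]
    have hmA2 : Measurable (fun x : UnitAddCircle => NN p (A (cpt s (2 • x)))) :=
      hmA.comp (measurable_const_smul 2)
    have hmC2 : Measurable (fun x : UnitAddCircle => NN p (cpt s (2 • x) • B (cpt s (2 • x)))) :=
      hmC.comp (measurable_const_smul 2)
    calc ∫⁻ x, NN p (F (cpt ρ x)) ≤ ∫⁻ x, (NN p (A (cpt s (2 • x)))
          + 4 * NN p (cpt s (2 • x) • B (cpt s (2 • x)))) := by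
          refine lintegral_mono fun x => ?_
          have hn : ‖cpt ρ x‖ = ρ := aux_cpt_norm ρ hρ0 x
          have hne : cpt ρ x ≠ 0 := by
            rw [← norm_ne_zero_iff, hn]; linarith
          have h1 := aux_F_split ha hF (cpt ρ x) (by rw [hn]; exact hρ1)
          have h2 : cpt ρ x • B (cpt ρ x ^ 2) = (cpt ρ x)⁻¹ • (cpt ρ x ^ 2 • B (cpt ρ x ^ 2)) := by
            rw [smul_smul]; congr 1; field_simp
          show NN p (F (cpt ρ x)) ≤ _
          rw [h1, hs, aux_cpt_sq, ← hA, ← hB, h2]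
          refine (aux_NN_add p hp hp1 _ _).trans (add_le_add_right (aux_NN_smul4 p hp hp1 _ ?_ _) _)
          rw [norm_inv, hn]
          calc ρ⁻¹ ≤ (1/4)⁻¹ := by gcongr
            _ = 4 := by norm_num
      _ = (∫⁻ x, NN p (A (cpt s (2 • x)))) + 4 * ∫⁻ x, NN p (cpt s (2 • x) • B (cpt s (2 • x))) := by
          rw [lintegral_add_left hmA2, lintegral_const_mul _ hmC2]
      _ ≤ 2 * K + 4 * (2 * K) := by gcongr
      _ = 10 * K := by ring
  rcases le_total (1/4) r with h | h
  · refine (main r h hr1).trans ?_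
    gcongr
    exact le_self_add
  · have hpt := aux_HL_E F hFd p hp hp1 (10 * K) main
    rw [aux_hp_cpt]
    calc ∫⁻ x, NN p (F (cpt r x)) ≤ ∫⁻ _ : UnitAddCircle, 2 * 2 ^ (1/p) * (10 * K) :=
          lintegral_mono fun x => hpt _ (by rw [aux_cpt_norm r hr]; exact h)
      _ = 2 * 2 ^ (1/p) * (10 * K) := by simp
      _ ≤ _ := by
        rw [← mul_assoc]
        gcongr
        exact le_add_self

end key

section final
variable {Y : Type*} [NormedAddCommGroup Y] [NormedSpace ℂ Y] [CompleteSpace Y]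

lemma aux_coef_add {F G : ℂ → Y} (hF : DifferentiableOn ℂ F (Metric.ball 0 1))
    (hG : DifferentiableOn ℂ G (Metric.ball 0 1)) (n : ℕ) :
    coefN (F + G) n = coefN F n + coefN G n := by
  have h0 : Metric.ball (0 : ℂ) 1 ∈ 𝓝 (0 : ℂ) := Metric.ball_mem_nhds _ one_pos
  unfold coefN
  rw [iteratedDeriv_add (hF.analyticAt h0).contDiffAt (hG.analyticAt h0).contDiffAt, smul_add]

lemma aux_coef_smul {F : ℂ → Y} (hF : DifferentiableOn ℂ F (Metric.ball 0 1)) (c : ℂ) (n : ℕ) :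
    coefN (c • F) n = c • coefN F n := by
  have h0 : Metric.ball (0 : ℂ) 1 ∈ 𝓝 (0 : ℂ) := Metric.ball_mem_nhds _ one_pos
  unfold coefN
  rw [iteratedDeriv_const_smul (hF.analyticAt h0).contDiffAt, smul_comm]

lemma aux_PBN_add {a b : ℕ → Y} (ha : PBN a) (hb : PBN b) : PBN (fun n => a n + b n) := by
  obtain ⟨N, C, hC, h⟩ := ha
  obtain ⟨N', C', hC', h'⟩ := hb
  refine ⟨N + N', C + C', by positivity, fun n => ?_⟩
  have h1 : (1 : ℝ) ≤ (n : ℝ) + 1 := by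
    have : (0 : ℝ) ≤ n := by positivity
    linarith
  calc ‖a n + b n‖ ≤ ‖a n‖ + ‖b n‖ := norm_add_le _ _
    _ ≤ C * ((n : ℝ) + 1) ^ N + C' * ((n : ℝ) + 1) ^ N' := add_le_add (h n) (h' n)
    _ ≤ C * ((n : ℝ) + 1) ^ (N + N') + C' * ((n : ℝ) + 1) ^ (N + N') := by
      gcongr
      · omega
      · omega
    _ = _ := by ring

lemma aux_PBN_smul {a : ℕ → Y} (c : ℂ) (ha : PBN a) : PBN (fun n => c • a n) := by
  obtain ⟨N, C, hC, h⟩ := ha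
  refine ⟨N, ‖c‖ * C, by positivity, fun n => ?_⟩
  rw [norm_smul, mul_assoc]
  gcongr
  exact h n

/-- holomorphic functions with polynomially bounded coefficients -/
def aux_VV : Submodule ℂ (ℂ → Y) where
  carrier := {F | DifferentiableOn ℂ F (Metric.ball 0 1) ∧ PBN (coefN F)}
  add_mem' := by
    rintro F G ⟨hF, hF'⟩ ⟨hG, hG'⟩
    refine ⟨hF.add hG, ?_⟩
    rw [show coefN (F + G) = fun n => coefN F n + coefN G n from funext (aux_coef_add hF hG)]
    exact aux_PBN_add hF' hG'
  zero_mem' := by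
    refine ⟨differentiableOn_const 0, 0, 0, le_rfl, fun n => ?_⟩
    have h : coefN (0 : ℂ → Y) n = 0 := by
      have := aux_coef_smul (F := (0 : ℂ → Y)) (differentiableOn_const 0) 0 n
      simpa using this
    rw [h]; simp
  smul_mem' := by
    rintro c F ⟨hF, hF'⟩
    refine ⟨hF.const_smul c, ?_⟩
    rw [show coefN (c • F) = fun n => c • coefN F n from funext (aux_coef_smul hF c)]
    exact aux_PBN_smul c hF'

def aux_TT : (aux_VV (Y := Y)) →ₗ[ℂ] ((ℝ → ℂ) → Y) where
  toFun F := UU (fun n => coefN F.1 (idxN n))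
  map_add' F G := by
    funext g
    have h : (fun n => coefN ((F + G : aux_VV (Y := Y)) : ℂ → Y) (idxN n))
        = fun n => coefN F.1 (idxN n) + coefN G.1 (idxN n) :=
      funext fun n => aux_coef_add F.2.1 G.2.1 (idxN n)
    rw [h]
    show UU (fun n => coefN F.1 (idxN n) + coefN G.1 (idxN n)) g =
      UU (fun n => coefN F.1 (idxN n)) g + UU (fun n => coefN G.1 (idxN n)) g
    unfold UU
    by_cases hg : Smooth1PeriodicC g
    · rw [if_pos hg, if_pos hg, if_pos hg, ← (aux_U_summable (aux_PBZ F.2.2) hg).tsum_add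
        (aux_U_summable (aux_PBZ G.2.2) hg)]
      simp [smul_add]
    · simp [hg]
  map_smul' c F := by
    funext g
    have h : (fun n => coefN ((c • F : aux_VV (Y := Y)) : ℂ → Y) (idxN n))
        = fun n => c • coefN F.1 (idxN n) :=
      funext fun n => aux_coef_smul F.2.1 c (idxN n)
    rw [h]
    show UU (fun n => c • coefN F.1 (idxN n)) g = c • UU (fun n => coefN F.1 (idxN n)) g
    unfold UU
    by_cases hg : Smooth1PeriodicC g
    · rw [if_pos hg, if_pos hg, ← (aux_U_summable (aux_PBZ F.2.2) hg).tsum_const_smul]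
      congr 1; funext n
      rw [smul_comm]
    · simp [hg]

def idxInv (m : ℕ) : ℤ := if m % 2 = 0 then ((m / 2 : ℕ) : ℤ) else Int.negSucc (m / 2)

lemma aux_idxInv (n : ℤ) : idxInv (idxN n) = n := by
  rcases n with n | n
  · have h : idxN (Int.ofNat n) = 2 * n := rfl
    rw [h]; unfold idxInv
    simp
  · have h : idxN (Int.negSucc n) = 2 * n + 1 := rfl
    rw [h]; unfold idxInv
    rw [if_neg (by omega)]
    congr 1; omega

lemma aux_idxInv_abs (m : ℕ) : |((idxInv m : ℤ) : ℝ)| ≤ (m : ℝ) + 1 := by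
  have h : |idxInv m| ≤ (m : ℤ) + 1 := by
    unfold idxInv
    split_ifs
    · rw [abs_of_nonneg (by positivity)]; omega
    · rw [Int.negSucc_eq, abs_neg, abs_of_nonneg (by positivity)]; omega
  exact_mod_cast h

lemma aux_coef_dist {u : (ℝ → ℂ) → Y} (hu : IsPeriodicDistributionC u) :
    ∃ a : ℕ → Y, PBN a ∧ ∀ n : ℤ, u (fe (-n)) = a (idxN n) := by
  refine ⟨fun m => u (fe (-(idxInv m))), ?_, fun n => by simp only [aux_idxInv]⟩
  obtain ⟨k, C, hC⟩ := hu.2.2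
  refine ⟨k, |C| * ((k + 1) * (2 * Real.pi) ^ k), by positivity, fun m => ?_⟩
  refine (hC _ (aux_fe_smooth _)).trans ?_
  have hm0 : (0 : ℝ) ≤ m := by positivity
  have hpi := Real.pi_gt_three
  have h1 : ∀ i ∈ Finset.range (k + 1), testSeminormC i (fe (-(idxInv m))) ≤
      (2 * Real.pi) ^ k * ((m : ℝ) + 1) ^ k := by
    intro i hi
    have : Nonempty (Set.Icc (0 : ℝ) 1) := ⟨⟨0, by simp⟩⟩
    refine ciSup_le fun t => ?_
    rw [aux_fe_iter, norm_mul, aux_fe_norm, mul_one, norm_pow, ← mul_pow]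
    have h2 : ‖(2 * Real.pi * Complex.I * ((-(idxInv m) : ℤ) : ℂ))‖ ≤ 2 * Real.pi * ((m : ℝ) + 1) := by
      simp only [norm_mul, Complex.norm_I, Complex.norm_intCast, Complex.norm_real,
        Complex.norm_ofNat, mul_one, Real.norm_eq_abs, abs_of_pos Real.pi_pos, Int.cast_neg,
        norm_neg, abs_neg]
      gcongr
      exact aux_idxInv_abs m
    calc _ ≤ (2 * Real.pi * ((m : ℝ) + 1)) ^ i := by gcongr
      _ ≤ _ := by
        apply pow_le_pow_right₀
        · nlinarith
        · have := Finset.mem_range.1 hi; omega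
  calc C * ∑ i ∈ Finset.range (k + 1), testSeminormC i (fe (-(idxInv m)))
      ≤ |C| * ∑ i ∈ Finset.range (k + 1), testSeminormC i (fe (-(idxInv m))) := by
        gcongr
        · exact Finset.sum_nonneg fun i _ => aux_semi_nonneg _ _
        · exact le_abs_self C
    _ ≤ |C| * ∑ i ∈ Finset.range (k + 1), (2 * Real.pi) ^ k * ((m : ℝ) + 1) ^ k := by
        gcongr with i hi
        exact h1 i hi
    _ = _ := by
        rw [Finset.sum_const, Finset.card_range, nsmul_eq_mul]; push_cast; ring

end final

theorem HpD_isomorphic_HpT {X Y : Type*}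
    [NormedAddCommGroup X] [NormedSpace ℝ X] [CompleteSpace X]
    [NormedAddCommGroup Y] [NormedSpace ℂ Y] [CompleteSpace Y]
    (ι : X →ₗ[ℝ] Y) (ReY ImY : Y →ₗ[ℝ] X)
    (hdecomp : ∀ y : Y, y = ι (ReY y) + Complex.I • ι (ImY y))
    (hReι : ∀ x, ReY (ι x) = x) (hImι : ∀ x, ImY (ι x) = 0)
    (hbd : ∃ Cb : ℝ, 0 < Cb ∧ (∀ y, ‖ReY y‖ ≤ Cb * ‖y‖) ∧ (∀ y, ‖ImY y‖ ≤ Cb * ‖y‖) ∧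
      ∀ x, ‖ι x‖ ≤ Cb * ‖x‖)
    (p : ℝ) (hp : 0 < p) (hp1 : p ≤ 1) :
    ∃ (T : (ℂ → Y) →ₗ[ℂ] ((ℝ → ℂ) → Y)) (c C : ℝ≥0∞), 0 < c ∧ C < ⊤ ∧
      (∀ F, memHpD p F → memHpT p (T F) ∧
        c * qHpD p F ≤ qHpT p (T F) ∧ qHpT p (T F) ≤ C * qHpD p F) ∧
      (∀ u, memHpT p u → ∃ F, memHpD p F ∧
        ∀ g, Smooth1PeriodicC g → T F g = u g) := by
  set C₁ : ℝ≥0∞ := (8 + 2 * 2 ^ (1/p)) ^ (1/p) with hC₁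
  set C₂ : ℝ≥0∞ := (10 + 2 * 2 ^ (1/p) * 10) ^ (1/p) with hC₂
  have hpi : 0 ≤ 1/p := by positivity
  have h2p : (2 : ℝ≥0∞) ^ (1/p) ≠ ⊤ := ENNReal.rpow_ne_top_of_nonneg hpi (by norm_num)
  have hC₁t : C₁ ≠ ⊤ := ENNReal.rpow_ne_top_of_nonneg hpi
    (ENNReal.add_ne_top.2 ⟨by norm_num, ENNReal.mul_ne_top (by norm_num) h2p⟩)
  have hC₂t : C₂ ≠ ⊤ := ENNReal.rpow_ne_top_of_nonneg hpi
    (ENNReal.add_ne_top.2 ⟨by norm_num, ENNReal.mul_ne_top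
      (ENNReal.mul_ne_top (by norm_num) h2p) (by norm_num)⟩)
  have hC₂0 : C₂ ≠ 0 := by
    rw [hC₂]
    exact (ENNReal.rpow_pos_of_nonneg (lt_of_lt_of_le (by norm_num) le_self_add) hpi).ne'
  obtain ⟨T, hT⟩ := LinearMap.exists_extend (aux_TT (Y := Y))
  have hTF : ∀ F (hF : F ∈ aux_VV (Y := Y)), T F = UU (fun n => coefN F (idxN n)) := by
    intro F hF
    have := congrArg (fun L => L ⟨F, hF⟩) hT
    exact this
  -- norm comparison
  have hup : ∀ (u : (ℝ → ℂ) → Y) (a : ℕ → Y) (F : ℂ → Y), IsPeriodicDistributionC u → PBN a →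
      (∀ n : ℤ, u (fe (-n)) = a (idxN n)) → DifferentiableOn ℂ F (Metric.ball 0 1) →
      (∀ z : ℂ, ‖z‖ < 1 → HasSum (fun n => z ^ n • a n) (F z)) →
      qHpT p u ≤ C₁ * qHpD p F := by
    intro u a F hu ha hua hFd hF
    refine iSup_le fun r => ?_
    exact aux_root p hp _ _ _ (aux_upper hu ha hua F hFd hF p hp hp1 r.1 r.2.1 r.2.2)
  have hlow : ∀ (u : (ℝ → ℂ) → Y) (a : ℕ → Y) (F : ℂ → Y), IsPeriodicDistributionC u → PBN a →
      (∀ n : ℤ, u (fe (-n)) = a (idxN n)) → DifferentiableOn ℂ F (Metric.ball 0 1) →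
      (∀ z : ℂ, ‖z‖ < 1 → HasSum (fun n => z ^ n • a n) (F z)) →
      qHpD p F ≤ C₂ * qHpT p u := by
    intro u a F hu ha hua hFd hF
    refine iSup_le fun r => ?_
    exact aux_root p hp _ _ _ (aux_lower hu ha hua F hFd hF p hp hp1 r.1 r.2.1 r.2.2)
  refine ⟨T, C₂⁻¹, C₁, ENNReal.inv_pos.2 hC₂t, lt_top_iff_ne_top.2 hC₁t, ?_, ?_⟩
  · intro F hF
    have ha : PBN (coefN F) := aux_coef_PBN p hp hp1 hF
    have hdist : IsPeriodicDistributionC (T F) := by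
      rw [hTF F ⟨hF.1, ha⟩]; exact aux_U_dist (aux_PBZ ha)
    have hua : ∀ n : ℤ, T F (fe (-n)) = coefN F (idxN n) := by
      intro n
      rw [hTF F ⟨hF.1, ha⟩, aux_U_fe]
    have h1 := hup (T F) (coefN F) F hdist ha hua hF.1 (aux_taylor hF.1)
    have h2 := hlow (T F) (coefN F) F hdist ha hua hF.1 (aux_taylor hF.1)
    refine ⟨⟨hdist, lt_of_le_of_lt h1 ?_⟩, ?_, h1⟩
    · refine ENNReal.mul_lt_top (lt_top_iff_ne_top.2 hC₁t) ?_
      obtain ⟨B, hB, hBF⟩ := hF.2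
      refine lt_of_le_of_lt (iSup_le fun r => ?_)
        (lt_top_iff_ne_top.2 (ENNReal.rpow_ne_top_of_nonneg hpi hB.ne))
      exact ENNReal.rpow_le_rpow (hBF r.1 r.2.1 r.2.2) hpi
    · calc C₂⁻¹ * qHpD p F ≤ C₂⁻¹ * (C₂ * qHpT p (T F)) := by gcongr
        _ = qHpT p (T F) := by
          rw [← mul_assoc, ENNReal.inv_mul_cancel hC₂0 hC₂t, one_mul]
  · intro u hu
    obtain ⟨a, ha, hua⟩ := aux_coef_dist hu.1
    have hd := aux_ps_diff ha
    have hs := aux_ps_hasSum ha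
    have h2 := hlow u a (psum a) hu.1 ha hua hd hs
    have hV : psum a ∈ aux_VV (Y := Y) := ⟨hd, by rw [aux_coef_ps ha]; exact ha⟩
    refine ⟨psum a, ⟨hd, qHpD p (psum a) ^ p, ?_, fun r hr hr1 => aux_hpD_le p hp _ r hr hr1⟩, ?_⟩
    · refine lt_top_iff_ne_top.2 (ENNReal.rpow_ne_top_of_nonneg hp.le (ne_of_lt ?_))
      exact lt_of_le_of_lt h2 (ENNReal.mul_lt_top (lt_top_iff_ne_top.2 hC₂t) hu.2)
    · intro g hg
      rw [hTF _ hV, aux_coef_ps ha]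
      unfold UU
      rw [if_pos hg]
      refine HasSum.tsum_eq ?_
      refine (aux_repr hu.1 hg).congr_fun fun n => ?_
      rw [hua]


end
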